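/- (Evans–Krylov theorem) Let F : Sym(n) → ℝ be concave, satisfy F(0) = 0, and be uniformly elliptic in the sense that λ‖N‖ ≤ F(M + N) − F(M) ≤ Λ‖N‖ for all M ∈ Sym(n) and all positive semidefinite N ∈ Sym(n). There exist α ∈ (0,1) and C > 0 depending only on n, λ, Λ such that: if u : B₁ → ℝ is continuously differentiable with Lipschitz gradient (u ∈ C^{1,1}(B₁)) and F(D²u(x)) = 0 for almost every x ∈ B₁, then the Hessian D²u has an α-Hölder continuous representative on B_{1/2} and ‖u‖_{L^∞(B_{1/2})} + ‖Du‖_{L^∞(B_{1/2})} + ‖D²u‖_{L^∞(B_{1/2})} + sup_{x≠y ∈ B_{1/2}} ‖D²u(x) − D²u(y)‖/|x−y|^α ≤ C ‖u‖_{L^∞(B₁)}. -/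

import Mathlib

open MeasureTheory Metric Set Filter
open scoped ENNReal NNReal Topology

noncomputable section

/-- Euclidean space `ℝⁿ`. -/
abbrev En (n : ℕ) := EuclideanSpace ℝ (Fin n)

/-- Real `n × n` matrices. -/
abbrev Mat (n : ℕ) := Matrix (Fin n) (Fin n) ℝ

/-- The `L²` operator norm of a matrix. -/
def opNorm {n : ℕ} (M : Mat n) : ℝ := ‖Matrix.toEuclideanCLM (𝕜 := ℝ) M‖

/-- The second partial derivative `∂_{ij} u (x)`. -/
def pd2 {n : ℕ} (u : En n → ℝ) (i j : Fin n) (x : En n) : ℝ :=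
  fderiv ℝ (fun y => fderiv ℝ u y (EuclideanSpace.single i 1)) x (EuclideanSpace.single j 1)

/-- The Hessian matrix `D²u(x)`. -/
def hessian {n : ℕ} (u : En n → ℝ) (x : En n) : Mat n :=
  Matrix.of fun i j => pd2 u i j x

/-- `F` is uniformly elliptic on symmetric matrices:
`λ‖N‖ ≤ F(M + N) − F(M) ≤ Λ‖N‖` for all symmetric `M` and positive semidefinite `N`. -/
def UnifEllipticOperator {n : ℕ} (lam Lam : ℝ) (F : Mat n → ℝ) : Prop :=
  ∀ M N : Mat n, M.IsSymm → N.IsSymm → N.PosSemidef →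
    lam * opNorm N ≤ F (M + N) - F M ∧ F (M + N) - F M ≤ Lam * opNorm N

/-- `F` is concave on the space of symmetric matrices. -/
def ConcaveOnSym {n : ℕ} (F : Mat n → ℝ) : Prop :=
  ∀ M N : Mat n, M.IsSymm → N.IsSymm → ∀ t : ℝ, t ∈ Set.Icc (0 : ℝ) 1 →
    t * F M + (1 - t) * F N ≤ F (t • M + (1 - t) • N)

/-!
Concavity makes `F` nonnegative at every average of Hessians `D²u(pᵢ)`, so by ellipticity the sum of
the differences `D²u(pᵢ) - D²u(y)` is a Pucci subsolution matrix: if its eigenvalues are at most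
`c ≥ 0`, they are at least `-K c`. Hence second difference quotients of `u` are subsolutions up to
constants, and the contact set estimate (area formula), a Gaussian barrier and a Vitali covering
argument give the weak `L^ε` estimate for nonnegative supersolutions.

If the positive parts of `D²u(x) - D²u(y)` have trace at most `m` for all `x`, `y` in a ball, this
estimate, applied to diagonal sums of the Hessian over subsets of an orthonormal basis, improves `m`
by a fixed factor on a smaller concentric ball, and iterating gives the Hölder estimate for `D²u`.
Interpolating it against `sup |u|` absorbs the a priori bound on `D²u`.
-/

namespace EvansKrylov

open Module (finrank)
open scoped InnerProductSpace

section Hessian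

variable {E : Type*} [NormedAddCommGroup E] [NormedSpace ℝ E]

/-- The second derivative `D²u(x)`, encoded as a continuous bilinear form. -/
abbrev D2 (u : E → ℝ) (x : E) : E →L[ℝ] E →L[ℝ] ℝ := fderiv ℝ (fderiv ℝ u) x

/-- `u` is twice differentiable at `x` with Hessian `X`: it is differentiable near `x` and its
derivative is differentiable at `x`. -/
structure HasD2At (u : E → ℝ) (X : E →L[ℝ] E →L[ℝ] ℝ) (x : E) : Prop where
  eventually_differentiableAt : ∀ᶠ y in 𝓝 x, DifferentiableAt ℝ u y
  hasFDerivAt : HasFDerivAt (fderiv ℝ u) X x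

/-- `u` is of class `C^{1,1}` on `U`. -/
structure C11On (u : E → ℝ) (U : Set E) : Prop where
  differentiableAt : ∀ x ∈ U, DifferentiableAt ℝ u x
  exists_lipschitzOnWith : ∃ L : ℝ≥0, LipschitzOnWith L (fderiv ℝ u) U

variable {u v : E → ℝ} {X Y B : E →L[ℝ] E →L[ℝ] ℝ} {x z h : E} {U V : Set E} {r : ℝ}

theorem HasD2At.symm (hu : HasD2At u X x) (a b : E) : X a b = X b a :=
  second_derivative_symmetric_of_eventually
    (hu.eventually_differentiableAt.mono fun _ hy => hy.hasFDerivAt) hu.hasFDerivAt a b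

theorem hasD2At_clm (f : E →L[ℝ] ℝ) : HasD2At f 0 x where
  eventually_differentiableAt := .of_forall fun _ => f.differentiableAt
  hasFDerivAt := by
    rw [show fderiv ℝ f = fun _ => f from funext fun _ => f.fderiv]
    exact hasFDerivAt_const f x

theorem hasD2At_of_contDiff (hu : ContDiff ℝ 2 u) (x : E) : HasD2At u (D2 u x) x where
  eventually_differentiableAt := .of_forall (hu.differentiable two_ne_zero)
  hasFDerivAt := ((hu.fderiv_right (m := 1) (by norm_num)).differentiable one_ne_zero x).hasFDerivAt

theorem HasD2At.sub (hu : HasD2At u X x) (hv : HasD2At v Y x) :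
    HasD2At (fun y => u y - v y) (X - Y) x where
  eventually_differentiableAt := by
    filter_upwards [hu.eventually_differentiableAt, hv.eventually_differentiableAt] with y h₁ h₂
      using h₁.fun_sub h₂
  hasFDerivAt := by
    refine (hu.hasFDerivAt.sub hv.hasFDerivAt).congr_of_eventuallyEq ?_
    filter_upwards [hu.eventually_differentiableAt, hv.eventually_differentiableAt] with y h₁ h₂
      using fderiv_fun_sub h₁ h₂

theorem HasD2At.sum {ι : Type*} {s : Finset ι} {u : ι → E → ℝ} {X : ι → E →L[ℝ] E →L[ℝ] ℝ}
    (hu : ∀ i ∈ s, HasD2At (u i) (X i) x) :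
    HasD2At (fun y => ∑ i ∈ s, u i y) (∑ i ∈ s, X i) x := by
  have hdiff : ∀ᶠ y in 𝓝 x, ∀ i ∈ s, DifferentiableAt ℝ (u i) y :=
    s.eventually_all.2 fun i hi => (hu i hi).eventually_differentiableAt
  refine ⟨hdiff.mono fun y hy => DifferentiableAt.fun_sum hy, ?_⟩
  exact (HasFDerivAt.fun_sum fun i hi => (hu i hi).hasFDerivAt).congr_of_eventuallyEq
    (hdiff.mono fun y hy => fderiv_fun_sum hy)

theorem hasFDerivAt_comp_affine (a b r : ℝ) (z : E) (hu : DifferentiableAt ℝ u (z + r • x)) :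
    HasFDerivAt (fun y => a * u (z + r • y) + b) ((a * r) • fderiv ℝ u (z + r • x)) x := by
  have haffine : HasFDerivAt (fun y : E => z + r • y) (r • ContinuousLinearMap.id ℝ E) x :=
    ((hasFDerivAt_id x).const_smul r).const_add z
  refine (((hu.hasFDerivAt.comp x haffine).const_mul a).add_const b).congr_fderiv ?_
  ext e
  simp [mul_assoc]

theorem HasD2At.comp_affine (hu : HasD2At u X (z + r • x)) (a b : ℝ) :
    HasD2At (fun y => a * u (z + r • y) + b) ((a * r ^ 2) • X) x := by
  have hdiff : ∀ᶠ y in 𝓝 x, DifferentiableAt ℝ u (z + r • y) :=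
    (by fun_prop : Continuous fun y : E => z + r • y).continuousAt.eventually
      hu.eventually_differentiableAt
  refine ⟨hdiff.mono fun y hy => (hasFDerivAt_comp_affine a b r z hy).differentiableAt, ?_⟩
  have haffine : HasFDerivAt (fun y : E => z + r • y) (r • ContinuousLinearMap.id ℝ E) x :=
    ((hasFDerivAt_id x).const_smul r).const_add z
  refine (((hu.hasFDerivAt.comp x haffine).const_smul (a * r)).congr_of_eventuallyEq
    (hdiff.mono fun y hy => (hasFDerivAt_comp_affine a b r z hy).fderiv)).congr_fderiv ?_
  ext e e'
  simp only [smul_apply, ContinuousLinearMap.comp_apply, ContinuousLinearMap.id_apply,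
    map_smul, smul_eq_mul]
  ring

theorem C11On.mono (hu : C11On u U) (hVU : V ⊆ U) : C11On u V where
  differentiableAt x hx := hu.differentiableAt x (hVU hx)
  exists_lipschitzOnWith := hu.exists_lipschitzOnWith.imp fun _ hL => hL.mono hVU

theorem C11On.hasD2At (hu : C11On u U) (hU : U ∈ 𝓝 x) (hx : DifferentiableAt ℝ (fderiv ℝ u) x) :
    HasD2At u (D2 u x) x :=
  ⟨by filter_upwards [hU] with y hy using hu.differentiableAt y hy, hx.hasFDerivAt⟩

theorem C11On.sub (hu : C11On u U) (hv : C11On v U) : C11On (fun x => u x - v x) U := by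
  obtain ⟨L, hL⟩ := hu.exists_lipschitzOnWith
  obtain ⟨L', hL'⟩ := hv.exists_lipschitzOnWith
  refine ⟨fun x hx => (hu.differentiableAt x hx).fun_sub (hv.differentiableAt x hx), L + L',
    fun x hx y hy => ?_⟩
  rw [fderiv_fun_sub (hu.differentiableAt x hx) (hv.differentiableAt x hx),
    fderiv_fun_sub (hu.differentiableAt y hy) (hv.differentiableAt y hy)]
  exact hL.sub hL' hx hy

theorem C11On.sum {ι : Type*} {s : Finset ι} {u : ι → E → ℝ} (hu : ∀ i ∈ s, C11On (u i) U) :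
    C11On (fun x => ∑ i ∈ s, u i x) U := by
  choose! L hL using fun i hi => (hu i hi).exists_lipschitzOnWith
  have hdiff : ∀ x ∈ U, ∀ i ∈ s, DifferentiableAt ℝ (u i) x :=
    fun x hx i hi => (hu i hi).differentiableAt x hx
  refine ⟨fun x hx => DifferentiableAt.fun_sum (hdiff x hx), ∑ i ∈ s, L i,
    LipschitzOnWith.of_dist_le_mul fun x hx y hy => ?_⟩
  rw [fderiv_fun_sum (hdiff x hx), fderiv_fun_sum (hdiff y hy), NNReal.coe_sum, Finset.sum_mul]
  exact (dist_sum_sum_le _ _ _).trans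
    (Finset.sum_le_sum fun i hi => (hL i hi).dist_le_mul x hx y hy)

theorem C11On.comp_affine (hu : C11On u U) (hVU : ∀ x ∈ V, z + r • x ∈ U) (a b : ℝ) :
    C11On (fun x => a * u (z + r • x) + b) V := by
  obtain ⟨L, hL⟩ := hu.exists_lipschitzOnWith
  have hderiv x (hx : x ∈ V) :=
    hasFDerivAt_comp_affine a b r z (hu.differentiableAt _ (hVU x hx))
  refine ⟨fun x hx => (hderiv x hx).differentiableAt, ‖a * r‖₊ * (L * ‖r‖₊),
    LipschitzOnWith.of_dist_le_mul fun x hx y hy => ?_⟩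
  rw [(hderiv x hx).fderiv, (hderiv y hy).fderiv, dist_eq_norm, ← smul_sub, norm_smul,
    ← dist_eq_norm]
  calc ‖a * r‖ * dist (fderiv ℝ u (z + r • x)) (fderiv ℝ u (z + r • y))
      ≤ ‖a * r‖ * (L * dist (z + r • x) (z + r • y)) := by
        gcongr
        exact hL.dist_le_mul _ (hVU x hx) _ (hVU y hy)
    _ = ↑(‖a * r‖₊ * (L * ‖r‖₊)) * dist x y := by
        rw [dist_add_left, dist_smul₀]
        push_cast
        ring

theorem C11On.of_contDiff [FiniteDimensional ℝ E] (hu : ContDiff ℝ 2 u) (z : E) (r : ℝ) :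
    C11On u (ball z r) := by
  obtain ⟨L, hL⟩ := (hu.fderiv_right (m := 1) (by norm_num)).contDiffOn.exists_lipschitzOnWith
    one_ne_zero (convex_closedBall z r) (isCompact_closedBall z r)
  exact ⟨fun x _ => hu.differentiable two_ne_zero x, L, hL.mono ball_subset_closedBall⟩

theorem abs_taylor_two_sub_le {ε : ℝ} (hε : 0 ≤ ε) {s : ℝ}
    (hu : ∀ y ∈ ball x s, DifferentiableAt ℝ u y)
    (hB : ∀ y ∈ ball x s, ‖fderiv ℝ u y - fderiv ℝ u x - B (y - x)‖ ≤ ε * ‖y - x‖)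
    (hh : ‖h‖ < s) :
    |u (x + h) - u x - fderiv ℝ u x h - B h h / 2| ≤ ε * ‖h‖ ^ 2 := by
  have norm_smul_le (t : ℝ) (ht : t ∈ Icc (0 : ℝ) 1) : ‖t • h‖ ≤ ‖h‖ := by
    rw [norm_smul, Real.norm_of_nonneg ht.1]
    exact mul_le_of_le_one_left (norm_nonneg h) ht.2
  have mem_ball_segment (t : ℝ) (ht : t ∈ Icc (0 : ℝ) 1) : x + t • h ∈ ball x s := by
    simpa using (norm_smul_le t ht).trans_lt hh
  let remainder (t : ℝ) : ℝ := u (x + t • h) - t * fderiv ℝ u x h - t ^ 2 * (B h h / 2)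
  let slope (t : ℝ) : E →L[ℝ] ℝ := fderiv ℝ u (x + t • h) - fderiv ℝ u x - B (t • h)
  have hderiv (t : ℝ) (ht : t ∈ Icc (0 : ℝ) 1) : HasDerivAt remainder (slope t h) t := by
    have hline : HasDerivAt (fun t : ℝ => x + t • h) h t := by
      simpa using ((hasDerivAt_id t).smul_const h).const_add x
    have hu_line := (hu _ (mem_ball_segment t ht)).hasFDerivAt.comp_hasDerivAt t hline
    refine ((hu_line.sub ((hasDerivAt_id t).mul_const (fderiv ℝ u x h))).sub
      ((hasDerivAt_pow 2 t).mul_const (B h h / 2))).congr_deriv ?_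
    simp only [one_mul, Nat.cast_ofNat, Nat.add_one_sub_one, pow_one, map_smul, sub_apply,
      smul_apply, smul_eq_mul, sub_right_inj, slope]
    ring
  have hslope (t : ℝ) (ht : t ∈ Icc (0 : ℝ) 1) : ‖slope t h‖ ≤ ε * ‖h‖ ^ 2 := by
    have hB_line := hB _ (mem_ball_segment t ht)
    rw [add_sub_cancel_left] at hB_line
    calc ‖slope t h‖ ≤ ‖slope t‖ * ‖h‖ := (slope t).le_opNorm h
      _ ≤ ε * ‖h‖ * ‖h‖ := by grw [hB_line, norm_smul_le t ht]
      _ = ε * ‖h‖ ^ 2 := by ring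
  have hmean := norm_image_sub_le_of_norm_deriv_le_segment_01'
    (fun t ht => (hderiv t ht).hasDerivWithinAt) fun t ht => hslope t ⟨ht.1, ht.2.le⟩
  convert hmean using 1
  simp only [remainder, Real.norm_eq_abs, one_smul, zero_smul, add_zero]
  ring_nf

theorem HasD2At.exists_abs_taylor_sub_le (hu : HasD2At u X x) {ε : ℝ} (hε : 0 < ε) :
    ∃ s > 0, ∀ h : E, ‖h‖ < s →
      |u (x + h) - u x - fderiv ℝ u x h - X h h / 2| ≤ ε * ‖h‖ ^ 2 := by
  obtain ⟨s, hs, hball⟩ := Metric.eventually_nhds_iff_ball.1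
    (hu.eventually_differentiableAt.and (hu.hasFDerivAt.isLittleO.def hε))
  exact ⟨s, hs, fun h hh => abs_taylor_two_sub_le hε.le (fun y hy => (hball y hy).1)
    (fun y hy => (hball y hy).2) hh⟩

theorem HasD2At.nonneg_of_isLocalMin (hu : HasD2At u X x) (hmin : IsLocalMin u x) (e : E) :
    0 ≤ X e e := by
  suffices ∀ ε > 0, 0 ≤ X e e + ε * (2 * ‖e‖ ^ 2) by
    have hlim : Tendsto (fun ε : ℝ => X e e + ε * (2 * ‖e‖ ^ 2)) (𝓝[>] 0) (𝓝 (X e e)) := by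
      refine tendsto_nhdsWithin_of_tendsto_nhds (Continuous.tendsto' (by fun_prop) _ _ ?_)
      simp
    exact ge_of_tendsto hlim (eventually_mem_nhdsWithin.mono this)
  intro ε hε
  obtain ⟨s, hs, htaylor⟩ := hu.exists_abs_taylor_sub_le hε
  have hsmall : ∀ᶠ t : ℝ in 𝓝[>] 0, ‖t • e‖ < s ∧ u x ≤ u (x + t • e) := by
    have hline : Tendsto (fun t : ℝ => x + t • e) (𝓝 0) (𝓝 x) :=
      Continuous.tendsto' (by fun_prop) _ _ (by simp)
    have hnorm : Tendsto (fun t : ℝ => ‖t • e‖) (𝓝 0) (𝓝 0) :=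
      Continuous.tendsto' (by fun_prop) _ _ (by simp)
    exact nhdsWithin_le_nhds ((hnorm.eventually_lt_const hs).and (hline.eventually hmin))
  obtain ⟨t, ⟨ht_small, ht_min⟩, ht_pos⟩ := (hsmall.and eventually_mem_nhdsWithin).exists
  have hupper := (abs_le.1 (htaylor (t • e) ht_small)).2
  simp only [hmin.fderiv_eq_zero, map_smul, smul_apply, smul_eq_mul, zero_apply, norm_smul,
    mul_pow, Real.norm_eq_abs, sq_abs] at hupper
  have : 0 ≤ t ^ 2 * (X e e + ε * (2 * ‖e‖ ^ 2)) := by nlinarith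
  exact nonneg_of_mul_nonneg_right this (pow_pos ht_pos 2)

end Hessian

section QuadraticForms

variable {E : Type*} [NormedAddCommGroup E] [InnerProductSpace ℝ E] [CompleteSpace E]

/-- The Riesz isometry from the dual of a real Hilbert space, as an `ℝ`-linear (rather than
conjugate-linear) equivalence. -/
def riesz : (E →L[ℝ] ℝ) ≃ₗᵢ[ℝ] E := (InnerProductSpace.toDual ℝ E).symm

@[simp]
theorem inner_riesz (φ : E →L[ℝ] ℝ) (x : E) : ⟪riesz φ, x⟫_ℝ = φ x :=
  InnerProductSpace.toDual_symm_apply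

@[simp]
theorem riesz_innerSL (p : E) : riesz (innerSL ℝ p) = p :=
  (InnerProductSpace.toDual ℝ E).symm_apply_apply p

/-- The operator on a Hilbert space that represents a bilinear form. -/
def toOperator (X : E →L[ℝ] E →L[ℝ] ℝ) : E →L[ℝ] E :=
  (riesz (E := E)).toContinuousLinearEquiv.toContinuousLinearMap ∘L X

@[simp]
theorem inner_toOperator (X : E →L[ℝ] E →L[ℝ] ℝ) (a b : E) : ⟪toOperator X a, b⟫_ℝ = X a b :=
  inner_riesz (X a) b

@[simp]
theorem norm_toOperator (X : E →L[ℝ] E →L[ℝ] ℝ) : ‖toOperator X‖ = ‖X‖ :=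
  (riesz (E := E)).toLinearIsometry.norm_toContinuousLinearMap_comp

theorem isSymmetric_toOperator {X : E →L[ℝ] E →L[ℝ] ℝ} (hX : ∀ a b, X a b = X b a) :
    (toOperator X).IsSymmetric := fun a b => by
  change ⟪toOperator X a, b⟫_ℝ = ⟪a, toOperator X b⟫_ℝ
  rw [real_inner_comm (toOperator X b), inner_toOperator, inner_toOperator, hX]

theorem norm_le_of_forall_abs_apply_self_le {X : E →L[ℝ] E →L[ℝ] ℝ} {c : ℝ} (hc : 0 ≤ c)
    (hX : ∀ a b, X a b = X b a) (hquad : ∀ e, |X e e| ≤ c * ‖e‖ ^ 2) : ‖X‖ ≤ c := by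
  rw [← norm_toOperator, ContinuousLinearMap.norm_eq_iSup_rayleighQuotient _
    (isSymmetric_toOperator hX)]
  refine ciSup_le fun e => ?_
  rw [ContinuousLinearMap.rayleighQuotient, ContinuousLinearMap.reApplyInnerSelf_apply,
    inner_toOperator, abs_div, abs_sq]
  exact div_le_of_le_mul₀ (sq_nonneg _) hc (hquad e)

end QuadraticForms

section AreaFormula

variable {E : Type*} [NormedAddCommGroup E] [InnerProductSpace ℝ E] [FiniteDimensional ℝ E]
  [MeasurableSpace E] [BorelSpace E]

theorem abs_det_le_norm_pow (T : E →L[ℝ] E) : |T.det| ≤ ‖T‖ ^ finrank ℝ E := by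
  have hT : (T : E →ₗ[ℝ] E) '' closedBall 0 1 ⊆ closedBall 0 ‖T‖ := by
    rintro _ ⟨x, hx, rfl⟩
    rw [mem_closedBall_zero_iff] at hx ⊢
    exact T.le_of_opNorm_le_of_le le_rfl hx |>.trans_eq (mul_one _)
  have hvol := measure_mono (μ := volume) hT
  rw [Measure.addHaar_image_linearMap, Measure.addHaar_closedBall' _ _ (norm_nonneg _)] at hvol
  rwa [ENNReal.mul_le_mul_iff_left (measure_closedBall_pos _ _ one_pos).ne'
    measure_closedBall_lt_top.ne, ENNReal.ofReal_le_ofReal_iff (by positivity)] at hvol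

theorem volume_image_eq_zero_of_lipschitzOnWith {f : E → E} {A : Set E} {L : ℝ≥0}
    (hf : LipschitzOnWith L f A) (hA : volume A = 0) : volume (f '' A) = 0 := by
  have hμH : (μH[finrank ℝ E] : Measure E) A = 0 :=
    Measure.absolutelyContinuous_isAddHaarMeasure _ volume hA
  apply Measure.absolutelyContinuous_isAddHaarMeasure volume (μH[finrank ℝ E] : Measure E)
  refine le_antisymm ?_ bot_le
  simpa [hμH] using hf.hausdorffMeasure_image_le (d := finrank ℝ E) (by positivity)

theorem volume_image_le_of_norm_fderiv_le {f : E → E} {A : Set E} {L : ℝ≥0} {C : ℝ}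
    (hf : LipschitzOnWith L f A)
    (hderiv : ∀ᵐ x, x ∈ A → DifferentiableAt ℝ f x ∧ ‖fderiv ℝ f x‖ ≤ C) :
    volume (f '' A) ≤ ENNReal.ofReal (C ^ finrank ℝ E) * volume A := by
  let good : Set E := {x | DifferentiableAt ℝ f x} ∩ {x | ‖fderiv ℝ f x‖ ≤ C}
  let S : Set E := toMeasurable volume A ∩ good
  have hS : MeasurableSet S := (measurableSet_toMeasurable _ _).inter <|
    (measurableSet_of_differentiableAt ℝ f).inter <|
      measurableSet_le (measurable_fderiv ℝ f).norm measurable_const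
  have hbad : volume (f '' (A \ good)) = 0 := by
    refine volume_image_eq_zero_of_lipschitzOnWith (hf.mono sdiff_subset) ?_
    refine measure_mono_null ?_ hderiv
    exact fun x ⟨hxA, hx⟩ h => hx (h hxA)
  have hcover : f '' A ⊆ f '' S ∪ f '' (A \ good) := by
    rw [← image_union]
    refine image_mono fun x hx => ?_
    by_cases hgood : x ∈ good
    · exact .inl ⟨subset_toMeasurable _ _ hx, hgood⟩
    · exact .inr ⟨hx, hgood⟩
  have hdet : ∀ x ∈ S,
      ENNReal.ofReal |(fderiv ℝ f x).det| ≤ ENNReal.ofReal (C ^ finrank ℝ E) := fun x hx =>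
    ENNReal.ofReal_le_ofReal <| (abs_det_le_norm_pow _).trans <|
      pow_le_pow_left₀ (norm_nonneg _) hx.2.2 _
  calc volume (f '' A) ≤ volume (f '' S) + volume (f '' (A \ good)) :=
        (measure_mono hcover).trans (measure_union_le _ _)
    _ = volume (f '' S) := by rw [hbad, add_zero]
    _ ≤ ∫⁻ x in S, ENNReal.ofReal |(fderiv ℝ f x).det| :=
        addHaar_image_le_lintegral_abs_det_fderiv volume hS
          fun x hx => hx.2.1.hasFDerivAt.hasFDerivWithinAt
    _ ≤ ∫⁻ _ in S, ENNReal.ofReal (C ^ finrank ℝ E) := setLIntegral_mono measurable_const hdet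
    _ = ENNReal.ofReal (C ^ finrank ℝ E) * volume S := by simp
    _ ≤ ENNReal.ofReal (C ^ finrank ℝ E) * volume A := by
        gcongr _ * ?_
        exact (measure_mono inter_subset_left).trans_eq (measure_toMeasurable A)

end AreaFormula

section Contact

variable {E : Type*} [NormedAddCommGroup E] [InnerProductSpace ℝ E] {g : E → ℝ} {U : Set E}

theorem fderiv_eq_innerSL_of_isMinOn {x p : E} (hU : U ∈ 𝓝 x) (hg : DifferentiableAt ℝ g x)
    (hmin : IsMinOn (fun y => g y - ⟪p, y⟫_ℝ) U x) : fderiv ℝ g x = innerSL ℝ p := by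
  have hderiv : HasFDerivAt (fun y => g y - ⟪p, y⟫_ℝ) (fderiv ℝ g x - innerSL ℝ p) x :=
    hg.hasFDerivAt.sub (innerSL ℝ p).hasFDerivAt
  exact sub_eq_zero.1 ((hmin.isLocalMin hU).hasFDerivAt_eq_zero hderiv)

theorem HasD2At.nonneg_of_isMinOn {X : E →L[ℝ] E →L[ℝ] ℝ} {x p : E} (hg : HasD2At g X x)
    (hU : U ∈ 𝓝 x) (hmin : IsMinOn (fun y => g y - ⟪p, y⟫_ℝ) U x) (e : E) : 0 ≤ X e e := by
  simpa using (hg.sub (hasD2At_clm (innerSL ℝ p))).nonneg_of_isLocalMin (hmin.isLocalMin hU) e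

variable [FiniteDimensional ℝ E] [MeasurableSpace E] [BorelSpace E]

theorem volume_ball_le_of_forall_isMinOn {E₀ : Set E} {δ C : ℝ} (hU : IsOpen U)
    (hC : 0 ≤ C) (hg : C11On g U)
    (hslope : ∀ p ∈ ball (0 : E) δ, ∃ x ∈ U, IsMinOn (fun y => g y - ⟪p, y⟫_ℝ) U x)
    (hcontact : ∀ᵐ x, x ∈ U → ∃ X, HasD2At g X x ∧ ∀ p ∈ ball (0 : E) δ,
      IsMinOn (fun y => g y - ⟪p, y⟫_ℝ) U x → x ∈ E₀ ∧ ∀ e, X e e ≤ C * ‖e‖ ^ 2) :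
    volume (ball (0 : E) δ) ≤ ENNReal.ofReal (C ^ finrank ℝ E) * volume E₀ := by
  let A : Set E := {x ∈ U | ∃ p ∈ ball (0 : E) δ, IsMinOn (fun y => g y - ⟪p, y⟫_ℝ) U x}
  let f : E → E := fun x => riesz (fderiv ℝ g x)
  obtain ⟨L, hL⟩ := hg.exists_lipschitzOnWith
  have hf : LipschitzOnWith L f A := LipschitzOnWith.of_dist_le_mul fun x hx y hy => by
    simpa only [f, LinearIsometryEquiv.dist_map] using hL.dist_le_mul x hx.1 y hy.1
  have hball : ball (0 : E) δ ⊆ f '' A := fun p hp => by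
    obtain ⟨x, hx, hmin⟩ := hslope p hp
    refine ⟨x, ⟨hx, p, hp, hmin⟩, ?_⟩
    simp only [f, fderiv_eq_innerSL_of_isMinOn (hU.mem_nhds hx) (hg.differentiableAt x hx) hmin,
      riesz_innerSL]
  have hA : ∀ᵐ x, x ∈ A → x ∈ E₀ ∧ DifferentiableAt ℝ f x ∧ ‖fderiv ℝ f x‖ ≤ C := by
    filter_upwards [hcontact] with x hx ⟨hxU, p, hp, hmin⟩
    obtain ⟨X, hX, hcontact_x⟩ := hx hxU
    obtain ⟨hxE₀, hXC⟩ := hcontact_x p hp hmin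
    have hderiv : HasFDerivAt f (toOperator X) x :=
      (riesz (E := E)).toContinuousLinearEquiv.hasFDerivAt.comp x hX.hasFDerivAt
    refine ⟨hxE₀, hderiv.differentiableAt, ?_⟩
    rw [hderiv.fderiv, norm_toOperator]
    refine norm_le_of_forall_abs_apply_self_le hC hX.symm fun e => ?_
    rw [abs_of_nonneg (hX.nonneg_of_isMinOn (hU.mem_nhds hxU) hmin e)]
    exact hXC e
  calc volume (ball (0 : E) δ) ≤ volume (f '' A) := measure_mono hball
    _ ≤ ENNReal.ofReal (C ^ finrank ℝ E) * volume A :=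
        volume_image_le_of_norm_fderiv_le hf (hA.mono fun x hx hxA => (hx hxA).2)
    _ ≤ ENNReal.ofReal (C ^ finrank ℝ E) * volume E₀ := by
        gcongr 1
        exact measure_mono_ae (hA.mono fun x hx hxA => (hx hxA).1)

end Contact

section Subsolutions

variable {E : Type*} [NormedAddCommGroup E] [InnerProductSpace ℝ E]

/-- `X` belongs to a Pucci-type subsolution class: if the eigenvalues of `X` are at most `c ≥ 0`,
then they are at least `-K c`. For a symmetric `X` with extreme eigenvalues `μ₁ ≤ μₙ` this says
`-μ₁ ≤ K μₙ⁺`, which is all that the maximum principles below use of ellipticity. -/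
def IsPucciSub (K : ℝ) (X : E →L[ℝ] E →L[ℝ] ℝ) : Prop :=
  ∀ c, 0 ≤ c → (∀ e, X e e ≤ c * ‖e‖ ^ 2) → ∀ e, -(K * c) * ‖e‖ ^ 2 ≤ X e e

variable {K : ℝ} {w : E → ℝ} {X : E →L[ℝ] E →L[ℝ] ℝ} {U V : Set E}

theorem IsPucciSub.smul (hX : IsPucciSub K X) {a : ℝ} (ha : 0 < a) : IsPucciSub K (a • X) := by
  intro c hc hle e
  have hle' (e : E) : X e e ≤ c / a * ‖e‖ ^ 2 := by
    rw [div_mul_eq_mul_div, le_div_iff₀' ha]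
    exact hle e
  calc -(K * c) * ‖e‖ ^ 2 = a * (-(K * (c / a)) * ‖e‖ ^ 2) := by field_simp
    _ ≤ a * X e e := by gcongr; exact hX (c / a) (by positivity) hle' e

variable [FiniteDimensional ℝ E]

theorem exists_isMinOn_of_lt_on_sphere {f : E → ℝ} {R : ℝ} (hf : ContinuousOn f (closedBall 0 R))
    {x₀ : E} (hx₀ : x₀ ∈ ball 0 R) (hsphere : ∀ x ∈ sphere (0 : E) R, f x₀ < f x) :
    ∃ x ∈ ball 0 R, IsMinOn f (ball 0 R) x := by
  obtain ⟨x, hx, hmin⟩ := (isCompact_closedBall (0 : E) R).exists_isMinOn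
    ⟨x₀, ball_subset_closedBall hx₀⟩ hf
  refine ⟨x, mem_ball.2 (lt_of_le_of_ne hx fun hxR => ?_), hmin.on_subset ball_subset_closedBall⟩
  exact (hsphere x hxR).not_ge (hmin (ball_subset_closedBall hx₀))

theorem ofReal_div_pow_mul_le {a b : ℝ} (hb : 0 < b) {n : ℕ} {s t : ℝ≥0∞}
    (h : ENNReal.ofReal (a ^ n) * s ≤ ENNReal.ofReal (b ^ n) * t) :
    ENNReal.ofReal ((a / b) ^ n) * s ≤ t := by
  rw [div_pow, ENNReal.ofReal_div_of_pos (by positivity), div_eq_mul_inv, mul_right_comm,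
    ← div_eq_mul_inv]
  exact ENNReal.div_le_of_le_mul' h

variable [MeasurableSpace E] [BorelSpace E]

/-- `w` is a `C^{1,1}` strong subsolution on `U` for the Pucci-type class `IsPucciSub K`. -/
structure Subsolution (K : ℝ) (w : E → ℝ) (U : Set E) : Prop where
  c11On : C11On w U
  ae_isPucciSub : ∀ᵐ x, x ∈ U → ∃ X, HasD2At w X x ∧ IsPucciSub K X

theorem Subsolution.mono (hw : Subsolution K w U) (hVU : V ⊆ U) : Subsolution K w V :=
  ⟨hw.c11On.mono hVU, hw.ae_isPucciSub.mono fun _ hx hxV => hx (hVU hxV)⟩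

theorem quasiMeasurePreserving_affine (z : E) {r : ℝ} (hr : r ≠ 0) :
    Measure.QuasiMeasurePreserving (fun x : E => z + r • x) :=
  (measurePreserving_add_left volume z).quasiMeasurePreserving.comp
    (Measure.quasiMeasurePreserving_smul volume hr)

theorem Subsolution.comp_affine (hw : Subsolution K w U) {z : E} {r : ℝ} (hr : 0 < r)
    (hVU : ∀ x ∈ V, z + r • x ∈ U) {a : ℝ} (ha : 0 < a) (b : ℝ) :
    Subsolution K (fun x => a * w (z + r • x) + b) V where
  c11On := hw.c11On.comp_affine hVU a b
  ae_isPucciSub := by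
    filter_upwards [(quasiMeasurePreserving_affine z hr.ne').ae hw.ae_isPucciSub] with x hx hxV
    obtain ⟨X, hwX, hX⟩ := hx (hVU x hxV)
    exact ⟨_, hwX.comp_affine a b, hX.smul (by positivity)⟩

theorem Subsolution.mul_add (hw : Subsolution K w U) {a : ℝ} (ha : 0 < a) (b : ℝ) :
    Subsolution K (fun x => a * w x + b) U := by
  simpa using hw.comp_affine (z := 0) one_pos (fun x hx => by simpa using hx) ha b

theorem Subsolution.volume_ball_le_of_contact (hK : 0 ≤ K) {R R' δ Z : ℝ} (hR : R < R')
    (hw : Subsolution K w (ball 0 R')) {φ : E → ℝ} (hφ : ContDiff ℝ 2 φ) (hδ : 0 < δ) (hZ : 0 < Z)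
    (hφZ : ∀ x ∈ ball (0 : E) R, ∀ e, D2 φ x e e ≤ Z * ‖e‖ ^ 2) {x₀ : E} (hx₀ : x₀ ∈ ball 0 R)
    (hsphere : ∀ x ∈ sphere (0 : E) R, φ x₀ - w x₀ + δ * ‖x - x₀‖ ≤ φ x - w x) {E₀ : Set E}
    (hcontact : ∀ x ∈ ball (0 : E) R, φ x - w x ≤ φ x₀ - w x₀ + δ * ‖x - x₀‖ →
      (∃ X, IsPucciSub K X ∧ ∀ e, X e e ≤ D2 φ x e e) → x ∈ E₀) :
    ENNReal.ofReal ((δ / ((K + 1) * Z)) ^ finrank ℝ E) * volume (ball (0 : E) 1) ≤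
      volume E₀ := by
  apply ofReal_div_pow_mul_le (by positivity)
  rw [← Measure.addHaar_ball_of_pos volume (0 : E) hδ]
  have hsub : ball (0 : E) R ⊆ ball 0 R' := ball_subset_ball hR.le
  refine volume_ball_le_of_forall_isMinOn isOpen_ball (by positivity)
    ((C11On.of_contDiff hφ 0 R).sub (hw.c11On.mono hsub)) (fun p hp => ?_) ?_
  · refine exists_isMinOn_of_lt_on_sphere (fun x hx => ?_) hx₀ fun x hx => ?_
    · have hwx := (hw.c11On.differentiableAt x (closedBall_subset_ball hR hx)).continuousAt
      exact ((hφ.continuous.continuousAt.sub hwx).sub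
        (innerSL ℝ p).continuous.continuousAt).continuousWithinAt
    · have hne : 0 < ‖x - x₀‖ := norm_sub_pos_iff.2 fun h => (h ▸ hx₀).ne hx
      have hp' : ‖p‖ * ‖x - x₀‖ < δ * ‖x - x₀‖ := by gcongr; exact mem_ball_zero_iff.1 hp
      have hinner := (real_inner_le_norm p (x - x₀)).trans_lt hp'
      rw [inner_sub_right] at hinner
      linarith [hsphere x hx]
  · filter_upwards [hw.ae_isPucciSub] with x hx hxR
    obtain ⟨X, hwX, hX⟩ := hx (hsub hxR)
    have hg := (hasD2At_of_contDiff hφ x).sub hwX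
    refine ⟨_, hg, fun p hp hmin => ?_⟩
    have hle (e : E) : X e e ≤ D2 φ x e e :=
      sub_nonneg.1 (hg.nonneg_of_isMinOn (isOpen_ball.mem_nhds hxR) hmin e)
    refine ⟨hcontact x hxR ?_ ⟨X, hX, hle⟩, fun e => ?_⟩
    · have hp' : ‖p‖ * ‖x - x₀‖ ≤ δ * ‖x - x₀‖ := by gcongr; exact (mem_ball_zero_iff.1 hp).le
      have hinner := (real_inner_le_norm p (x - x₀)).trans hp'
      have hmin₀ : φ x - w x - ⟪p, x⟫_ℝ ≤ φ x₀ - w x₀ - ⟪p, x₀⟫_ℝ := hmin hx₀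
      rw [inner_sub_right] at hinner
      linarith
    · have hlower := hX Z hZ.le (fun e => (hle e).trans (hφZ x hxR e)) e
      have hupper := hφZ x hxR e
      simp only [sub_apply]
      linarith

end Subsolutions

section Barriers

variable {E : Type*} [NormedAddCommGroup E] [InnerProductSpace ℝ E]

theorem hasFDerivAt_mul_norm_sq (a : ℝ) (x : E) :
    HasFDerivAt (fun x : E => a * ‖x‖ ^ 2) ((2 * a) • innerSL ℝ x) x := by
  refine ((hasStrictFDerivAt_norm_sq x).hasFDerivAt.const_mul a).congr_fderiv ?_
  rw [two_nsmul, ← two_smul ℝ, smul_smul, mul_comm]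

theorem D2_mul_norm_sq (a : ℝ) (x e : E) :
    D2 (fun x : E => a * ‖x‖ ^ 2) x e e = 2 * a * ‖e‖ ^ 2 := by
  have hfderiv : fderiv ℝ (fun x : E => a * ‖x‖ ^ 2) = ⇑((2 * a) • innerSL ℝ (E := E)) :=
    funext fun x => (hasFDerivAt_mul_norm_sq a x).fderiv
  have hinner : innerSL ℝ e e = ‖e‖ ^ 2 := real_inner_self_eq_norm_sq e
  rw [D2, hfderiv, ContinuousLinearMap.fderiv]
  simp [hinner]

theorem hasFDerivAt_const_sub_gaussian (A B q : ℝ) (x : E) :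
    HasFDerivAt (fun x : E => B - A * Real.exp (-q * ‖x‖ ^ 2))
      ((2 * q * A * Real.exp (-q * ‖x‖ ^ 2)) • innerSL ℝ x) x := by
  refine (((hasFDerivAt_mul_norm_sq (-q) x).exp.const_mul A).const_sub B).congr_fderiv ?_
  simp only [smul_smul, ← neg_smul]
  ring_nf

theorem D2_const_sub_gaussian (A B q : ℝ) (x e : E) :
    D2 (fun x : E => B - A * Real.exp (-q * ‖x‖ ^ 2)) x e e =
      2 * q * A * Real.exp (-q * ‖x‖ ^ 2) * (‖e‖ ^ 2 - 2 * q * ⟪x, e⟫_ℝ ^ 2) := by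
  have hfderiv : fderiv ℝ (fun x : E => B - A * Real.exp (-q * ‖x‖ ^ 2)) =
      fun x => (2 * q * A * Real.exp (-q * ‖x‖ ^ 2)) • innerSL ℝ x :=
    funext fun x => (hasFDerivAt_const_sub_gaussian A B q x).fderiv
  have hsmul := ((hasFDerivAt_mul_norm_sq (-q) x).exp.const_mul (2 * q * A)).smul
    ((innerSL ℝ (E := E)).hasFDerivAt (x := x))
  have hinner (y : E) : innerSL ℝ y e = ⟪y, e⟫_ℝ := rfl
  rw [D2, hfderiv]
  refine (DFunLike.congr_fun (DFunLike.congr_fun hsmul.fderiv e) e).trans ?_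
  simp only [neg_mul, mul_neg, neg_smul, smul_neg, add_apply, smul_apply,
    ContinuousLinearMap.smulRight_apply, neg_apply, hinner, smul_eq_mul,
    inner_self_eq_norm_sq_to_K, Real.ringHom_apply]
  ring

theorem D2_const_sub_gaussian_le {A q : ℝ} (hA : 0 ≤ A) (hq : 0 ≤ q) (B : ℝ) (x e : E) :
    D2 (fun x : E => B - A * Real.exp (-q * ‖x‖ ^ 2)) x e e ≤
      2 * q * A * Real.exp (-q * ‖x‖ ^ 2) * ‖e‖ ^ 2 := by
  rw [D2_const_sub_gaussian]
  gcongr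
  exact sub_le_self _ (by positivity)

theorem IsPucciSub.not_le_D2_const_sub_gaussian {K A q : ℝ} {X : E →L[ℝ] E →L[ℝ] ℝ} {x : E}
    (hX : IsPucciSub K X) (hA : 0 < A) (hq : 0 < q) (hx : x ≠ 0) (hK : 1 + K < 2 * q * ‖x‖ ^ 2)
    (B : ℝ) : ¬ ∀ e, X e e ≤ D2 (fun x : E => B - A * Real.exp (-q * ‖x‖ ^ 2)) x e e := by
  intro hle
  have hupper := hle x
  have hlower := hX _ (by positivity)
    (fun e => (hle e).trans (D2_const_sub_gaussian_le hA.le hq.le B x e)) x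
  rw [D2_const_sub_gaussian, real_inner_self_eq_norm_sq] at hupper
  have hpos : 0 < 2 * q * A * Real.exp (-q * ‖x‖ ^ 2) * ‖x‖ ^ 2 := by positivity
  nlinarith [mul_pos hpos (sub_pos.2 hK)]

theorem exists_doubling_barrier (E : Type*) [NormedAddCommGroup E] [InnerProductSpace ℝ E] {K : ℝ}
    (hK : 0 ≤ K) : ∃ (φ : E → ℝ) (A Z : ℝ), 0 < Z ∧ ContDiff ℝ 2 φ ∧
      (∀ x, -A ≤ φ x) ∧ (∀ x ∈ sphere 0 (7 / 2), 0 ≤ φ x) ∧ (∀ x ∈ ball 0 3, φ x ≤ -3) ∧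
      (∀ x e, D2 φ x e e ≤ Z * ‖e‖ ^ 2) ∧
      ∀ x, 1 ≤ ‖x‖ → ∀ X, IsPucciSub K X → ¬ ∀ e, X e e ≤ D2 φ x e e := by
  let q := K + 1
  have hq : 0 < q := by positivity
  let g (s : ℝ) : ℝ := Real.exp (-q * s ^ 2)
  have hgap : 0 < g 3 - g (7 / 2) := by
    refine sub_pos.2 (Real.exp_lt_exp.2 ?_)
    linarith
  let A := 3 / (g 3 - g (7 / 2))
  have hA : 0 < A := by positivity
  have hA3 : A * (g 3 - g (7 / 2)) = 3 := div_mul_cancel₀ _ hgap.ne'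
  have hg1 (s : ℝ) : g s ≤ 1 := Real.exp_le_one_iff.2 (by nlinarith [sq_nonneg s])
  refine ⟨fun x => A * g (7 / 2) - A * g ‖x‖, A, 2 * q * A, by positivity,
    contDiff_const.sub (contDiff_const.mul (contDiff_const.mul (contDiff_norm_sq ℝ)).exp),
    fun x => ?_, fun x hx => ?_, fun x hx => ?_, fun x e => ?_, fun x hx X hX => ?_⟩
  · have hpos : 0 < g (7 / 2) := Real.exp_pos _
    nlinarith [hg1 ‖x‖]
  · simp [mem_sphere_zero_iff_norm.1 hx]
  · have hmono : g 3 ≤ g ‖x‖ := by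
      refine Real.exp_le_exp.2 ?_
      have : ‖x‖ ^ 2 ≤ 3 ^ 2 := by gcongr; exact (mem_ball_zero_iff.1 hx).le
      nlinarith
    nlinarith
  · refine (D2_const_sub_gaussian_le hA.le hq.le _ x e).trans ?_
    gcongr ?_ * _
    exact mul_le_of_le_one_right (by positivity) (hg1 ‖x‖)
  · refine hX.not_le_D2_const_sub_gaussian hA hq (norm_pos_iff.1 (by linarith)) ?_ _
    nlinarith [one_le_pow₀ (n := 2) hx]

end Barriers

section Scaling

variable {E : Type*} [NormedAddCommGroup E] [InnerProductSpace ℝ E]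

theorem add_smul_mem_ball_iff {z x : E} {r s : ℝ} (hr : 0 < r) :
    z + r • x ∈ ball z (r * s) ↔ x ∈ ball 0 s := by
  rw [mem_ball, dist_self_add_left, norm_smul, Real.norm_of_nonneg hr.le, mem_ball_zero_iff,
    mul_lt_mul_iff_right₀ hr]

theorem exists_eq_add_smul {z x : E} {r : ℝ} (hr : 0 < r) : ∃ y, x = z + r • y :=
  ⟨r⁻¹ • (x - z), by rw [smul_inv_smul₀ hr.ne', add_sub_cancel]⟩

variable [FiniteDimensional ℝ E] [MeasurableSpace E] [BorelSpace E]

theorem volume_sep_ball (z : E) {r : ℝ} (hr : 0 < r) (P : E → Prop) :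
    volume {x ∈ ball z r | P x} =
      ENNReal.ofReal (r ^ finrank ℝ E) * volume {x ∈ ball 0 1 | P (z + r • x)} := by
  have hpre : {x ∈ ball 0 1 | P (z + r • x)} =
      (fun x => r • x) ⁻¹' ((fun x => z + x) ⁻¹' {x ∈ ball z r | P x}) := by
    ext x
    have hball := add_smul_mem_ball_iff (z := z) (x := x) (s := 1) hr
    rw [mul_one] at hball
    simp only [mem_ofPred_eq, mem_preimage, hball]
  rw [hpre, Measure.addHaar_preimage_smul _ hr.ne', measure_preimage_add, ← mul_assoc,
    ← ENNReal.ofReal_mul (by positivity), abs_of_pos (by positivity),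
    mul_inv_cancel₀ (by positivity), ENNReal.ofReal_one, one_mul]

/-- A nonnegative `C^{1,1}` strong supersolution, i.e. `v ≥ 0` and `-v` is a subsolution. -/
structure NonnegSupersolution (K : ℝ) (v : E → ℝ) (U : Set E) : Prop where
  nonneg : ∀ x ∈ U, 0 ≤ v x
  subsolution_neg : Subsolution K (fun x => -v x) U

variable {K : ℝ} {v w : E → ℝ} {U V : Set E}

theorem NonnegSupersolution.mono (hv : NonnegSupersolution K v U) (hVU : V ⊆ U) :
    NonnegSupersolution K v V :=
  ⟨fun x hx => hv.nonneg x (hVU hx), hv.subsolution_neg.mono hVU⟩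

theorem NonnegSupersolution.continuousOn (hv : NonnegSupersolution K v U) : ContinuousOn v U := by
  have hneg : ContinuousOn (fun x => -v x) U := fun x hx =>
    (hv.subsolution_neg.c11On.differentiableAt x hx).continuousAt.continuousWithinAt
  simpa using hneg.fun_neg

theorem NonnegSupersolution.comp_affine {z : E} {r s a : ℝ}
    (hv : NonnegSupersolution K v (ball z (r * s))) (hr : 0 < r) (ha : 0 < a) :
    NonnegSupersolution K (fun x => a * v (z + r • x)) (ball 0 s) where
  nonneg x hx := mul_nonneg ha.le (hv.nonneg _ ((add_smul_mem_ball_iff hr).2 hx))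
  subsolution_neg := by
    simpa using hv.subsolution_neg.comp_affine hr (fun x => (add_smul_mem_ball_iff hr).2) ha 0

end Scaling

section MaximumPrinciple

variable {E : Type*} [NormedAddCommGroup E] [InnerProductSpace ℝ E] [FiniteDimensional ℝ E]
  [MeasurableSpace E] [BorelSpace E] {K : ℝ} {w : E → ℝ}

theorem Subsolution.le_volume_ball_one (hK : 0 ≤ K) {c : ℝ} (hc : 0 < c) (hc1 : c ≤ 1)
    (hw : Subsolution K w (ball 0 1)) (hle : ∀ x ∈ ball (0 : E) 1, w x ≤ 1) (h0 : 0 ≤ w 0) :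
    ENNReal.ofReal ((c / (8 * (K + 1))) ^ finrank ℝ E) * volume (ball (0 : E) 1) ≤
      volume {x ∈ ball (0 : E) 1 | -c < w x} := by
  have hZ (x e : E) : D2 (fun x : E => 32 * ‖x‖ ^ 2) x e e ≤ 64 * ‖e‖ ^ 2 := by
    rw [D2_mul_norm_sq]
    norm_num
  have hball : ball (0 : E) (1 / 2) ⊆ ball 0 1 := ball_subset_ball (by norm_num)
  convert hw.volume_ball_le_of_contact hK (R := 1 / 2) (δ := 8 * c) (by norm_num)
    (contDiff_const.mul (contDiff_norm_sq ℝ)) (by positivity) (by norm_num : (0 : ℝ) < 64)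
    (fun x _ => hZ x) (x₀ := 0) (by simp) ?_ ?_ using 4
  · field_simp
    norm_num
  · intro x hx
    have hwx : w x ≤ 1 := hle x (closedBall_subset_ball (by norm_num) (sphere_subset_closedBall hx))
    simp only [mem_sphere_zero_iff_norm.1 hx, norm_zero, sub_zero]
    linarith
  · intro x hx hcontact _
    simp only [norm_zero, sub_zero] at hcontact
    refine ⟨hball hx, ?_⟩
    nlinarith [sq_nonneg (8 * ‖x‖ - c)]

theorem Subsolution.le_volume_ball (hK : 0 ≤ K) {c : ℝ} (hc : 0 < c) (hc1 : c ≤ 1) {z : E}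
    {r W : ℝ} (hr : 0 < r) (hW : 0 < W) (hw : Subsolution K w (ball z r))
    (hle : ∀ x ∈ ball z r, w x ≤ W) (hz : 0 ≤ w z) :
    ENNReal.ofReal ((c / (8 * (K + 1))) ^ finrank ℝ E) * volume (ball z r) ≤
      volume {x ∈ ball z r | -(c * W) < w x} := by
  have hmem (x : E) (hx : x ∈ ball (0 : E) 1) : z + r • x ∈ ball z r := by
    simpa using (add_smul_mem_ball_iff (z := z) hr).2 hx
  have hunit := Subsolution.le_volume_ball_one hK hc hc1
    (hw.comp_affine hr hmem (inv_pos.2 hW) 0)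
    (fun x hx => by simpa [inv_mul_le_iff₀ hW] using hle _ (hmem x hx))
    (by simpa using mul_nonneg (inv_nonneg.2 hW.le) hz)
  rw [volume_sep_ball z hr, Measure.addHaar_ball_of_pos _ z hr, mul_left_comm]
  gcongr
  refine hunit.trans (measure_mono fun x hx => ⟨hx.1, ?_⟩)
  have hwx : -c < W⁻¹ * w (z + r • x) := by simpa using hx.2
  rw [lt_inv_mul_iff₀ hW] at hwx
  linarith

end MaximumPrinciple

section WeakHarnack

variable (E : Type*) [NormedAddCommGroup E] [InnerProductSpace ℝ E] [FiniteDimensional ℝ E]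
  [MeasurableSpace E] [BorelSpace E] {K : ℝ}

theorem exists_doubling_ball_one (hK : 0 ≤ K) : ∃ M μ : ℝ, 1 < M ∧ 0 < μ ∧
    ∀ v : E → ℝ, NonnegSupersolution K v (ball 0 4) → ∀ x₀ ∈ ball (0 : E) 3, v x₀ ≤ 1 →
      ENNReal.ofReal μ * volume (ball (0 : E) 1) ≤ volume {x ∈ ball (0 : E) 1 | v x ≤ M} := by
  obtain ⟨φ, A, Z, hZ, hφ, hlower, hsphere, hupper, hφZ, hφX⟩ := exists_doubling_barrier E hK
  have hA : 3 ≤ A := by linarith [hlower 0, hupper 0 (by simp)]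
  refine ⟨A, ((1 / 7) / ((K + 1) * Z)) ^ finrank ℝ E, by linarith, by positivity,
    fun v hv x₀ hx₀ hvx₀ => ?_⟩
  have hφx₀ := hupper x₀ hx₀
  have hdist {x : E} (hx : x ∈ closedBall (0 : E) (7 / 2)) : ‖x - x₀‖ ≤ 7 := by
    rw [mem_closedBall_zero_iff] at hx
    rw [mem_ball_zero_iff] at hx₀
    linarith [norm_sub_le x x₀]
  refine hv.subsolution_neg.volume_ball_le_of_contact hK (R := 7 / 2) (by norm_num) hφ
    (by norm_num) hZ (fun x _ => hφZ x) (ball_subset_ball (by norm_num) hx₀) (fun x hx => ?_)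
    fun x hx hcontact ⟨X, hX, hXφ⟩ => ⟨?_, ?_⟩
  · have hdist_x := hdist (sphere_subset_closedBall hx)
    have hvx := hv.nonneg x (closedBall_subset_ball (by norm_num) (sphere_subset_closedBall hx))
    linarith [hsphere x hx]
  · by_contra hx1
    exact hφX x (by simpa using hx1) X hX hXφ
  · linarith [hdist (ball_subset_closedBall hx), hlower x]

theorem exists_doubling (hK : 0 ≤ K) : ∃ M μ : ℝ, 1 < M ∧ 0 < μ ∧
    ∀ (v : E → ℝ) (z : E) (r a : ℝ), 0 < r → 0 < a → NonnegSupersolution K v (ball z (r * 4)) →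
      ∀ x₀ ∈ ball z (r * 3), v x₀ ≤ a →
        ENNReal.ofReal μ * volume (ball z r) ≤ volume {x ∈ ball z r | v x ≤ M * a} := by
  obtain ⟨M, μ, hM, hμ, hunit⟩ := exists_doubling_ball_one E hK
  refine ⟨M, μ, hM, hμ, fun v z r a hr ha hv x₀ hx₀ hvx₀ => ?_⟩
  obtain ⟨y₀, rfl⟩ := exists_eq_add_smul (z := z) (x := x₀) hr
  have := hunit _ (hv.comp_affine hr (inv_pos.2 ha)) y₀ ((add_smul_mem_ball_iff hr).1 hx₀)
    (by rwa [inv_mul_le_iff₀ ha, mul_one])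
  rw [volume_sep_ball z hr, Measure.addHaar_ball_of_pos _ z hr, mul_left_comm]
  gcongr
  simpa only [inv_mul_le_iff₀ ha, mul_comm a] using this

end WeakHarnack

section GrowingInkSpots

variable {E : Type*} [NormedAddCommGroup E] [InnerProductSpace ℝ E]

theorem ball_one_sub_smul_subset {x : E} (hx : ‖x‖ ≤ 1) {t s : ℝ} (ht : t ≤ 1) (hs : 1 ≤ s) :
    ball ((1 - t) • x) (t * s) ⊆ ball 0 s := by
  refine ball_subset_ball' ?_
  rw [dist_zero_right, norm_smul, Real.norm_of_nonneg (sub_nonneg.2 ht)]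
  nlinarith [mul_le_mul_of_nonneg_left hx (sub_nonneg.2 ht)]

theorem dist_one_sub_smul (x : E) {s t : ℝ} (hst : s ≤ t) :
    dist ((1 - s) • x) ((1 - t) • x) = (t - s) * ‖x‖ := by
  rw [dist_eq_norm, ← sub_smul, norm_smul, Real.norm_of_nonneg (by linarith)]
  ring

theorem mem_ball_one_sub_smul {x : E} (hx : ‖x‖ < 1) {t : ℝ} (ht : 0 < t) :
    x ∈ ball ((1 - t) • x) t := by
  have hdist := dist_one_sub_smul x ht.le
  rw [sub_zero, one_smul, sub_zero] at hdist
  rw [mem_ball, hdist]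
  exact mul_lt_of_lt_one_right ht hx

variable [FiniteDimensional ℝ E] [MeasurableSpace E] [BorelSpace E] {μ : ℝ} {F G : Set E}

theorem volume_closedBall_five_mul_le (hμ : 0 < μ) {z : E} {r : ℝ} (hr : 0 < r) {s : Set E}
    (hs : ENNReal.ofReal μ * volume (ball z r) ≤ volume s) :
    volume (closedBall z (5 * r)) ≤ ENNReal.ofReal (5 ^ finrank ℝ E / μ) * volume s := by
  calc volume (closedBall z (5 * r))
      = ENNReal.ofReal (5 ^ finrank ℝ E / μ) * (ENNReal.ofReal μ * volume (ball z r)) := by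
        rw [Measure.addHaar_closedBall _ _ (by positivity), Measure.addHaar_ball_of_pos _ _ hr,
          ← mul_assoc, ← mul_assoc, ← ENNReal.ofReal_mul (by positivity),
          ← ENNReal.ofReal_mul (by positivity), div_mul_cancel₀ _ hμ.ne', mul_pow]
    _ ≤ _ := by gcongr

theorem volume_le_of_forall_mem_ball (hμ : 0 < μ) (hF : MeasurableSet F) {c : E → E} {r : E → ℝ}
    (hr : ∀ x ∈ F, r x ≤ 1) (hxr : ∀ x ∈ F, x ∈ ball (c x) (r x))
    (hG : ∀ x ∈ F, ball (c x) (r x) ⊆ G)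
    (hvol : ∀ x ∈ F,
      ENNReal.ofReal μ * volume (ball (c x) (r x)) ≤ volume (ball (c x) (r x) \ F)) :
    volume F ≤ ENNReal.ofReal (5 ^ finrank ℝ E / μ) * volume (G \ F) := by
  obtain ⟨u, huF, hdisj, hcover⟩ :=
    Vitali.exists_disjoint_subfamily_covering_enlargement_closedBall F c r 1 hr 5 (by norm_num)
  have hcount : u.Countable := hdisj.countable_of_nonempty_interior fun x hx =>
    ⟨x, ball_subset_interior_closedBall (hxr x (huF hx))⟩
  have hdisj' : u.PairwiseDisjoint fun x => ball (c x) (r x) \ F := hdisj.mono fun x =>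
    sdiff_subset.trans ball_subset_closedBall
  have hFcover : F ⊆ ⋃ x ∈ u, closedBall (c x) (5 * r x) := fun x hx => by
    obtain ⟨y, hy, hsub⟩ := hcover x hx
    exact mem_biUnion hy (hsub (ball_subset_closedBall (hxr x hx)))
  have := hcount.to_subtype
  calc volume F ≤ volume (⋃ x ∈ u, closedBall (c x) (5 * r x)) := measure_mono hFcover
    _ ≤ ∑' x : u, volume (closedBall (c x) (5 * r x)) := measure_biUnion_le _ hcount _
    _ ≤ ∑' x : u, ENNReal.ofReal (5 ^ finrank ℝ E / μ) * volume (ball (c x) (r x) \ F) :=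
        ENNReal.tsum_le_tsum fun x => volume_closedBall_five_mul_le hμ
          (pos_of_mem_ball (hxr x (huF x.2))) (hvol x (huF x.2))
    _ = ENNReal.ofReal (5 ^ finrank ℝ E / μ) * volume (⋃ x ∈ u, ball (c x) (r x) \ F) := by
        rw [ENNReal.tsum_mul_left,
          measure_biUnion hcount hdisj' fun _ _ => measurableSet_ball.diff hF]
    _ ≤ ENNReal.ofReal (5 ^ finrank ℝ E / μ) * volume (G \ F) := by
        gcongr
        exact iUnion₂_subset fun x hx => sdiff_subset_sdiff_left (hG x (huF hx))

theorem exists_critical_ball (hμ : 0 < μ) (hF : IsOpen F) {x : E} (hx : x ∈ F) (hx1 : ‖x‖ < 1)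
    (h1 : ENNReal.ofReal μ * volume (ball (0 : E) 1) ≤ volume (ball (0 : E) 1 \ F)) :
    ∃ t, 0 < t ∧ 2 * t ≤ 1 ∧
      volume (ball ((1 - t) • x) t \ F) < ENNReal.ofReal μ * volume (ball ((1 - t) • x) t) ∧
      ENNReal.ofReal μ * volume (ball ((1 - 2 * t) • x) (2 * t)) ≤
        volume (ball ((1 - 2 * t) • x) (2 * t) \ F) := by
  by_contra! hno
  have hall (j : ℕ) : ENNReal.ofReal μ * volume (ball ((1 - (1 / 2 : ℝ) ^ j) • x) ((1 / 2) ^ j)) ≤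
      volume (ball ((1 - (1 / 2 : ℝ) ^ j) • x) ((1 / 2) ^ j) \ F) := by
    induction j with
    | zero => simpa using h1
    | succ j ih =>
      have hj : 2 * (1 / 2 : ℝ) ^ (j + 1) = (1 / 2) ^ j := by ring
      by_contra! hlt
      have := hno ((1 / 2) ^ (j + 1)) (by positivity)
        (hj.trans_le (pow_le_one₀ (by norm_num) (by norm_num))) hlt
      rw [hj] at this
      exact this.not_ge ih
  obtain ⟨ε, hε, hεF⟩ := Metric.isOpen_iff.1 hF x hx
  obtain ⟨j, hj⟩ := exists_pow_lt_of_lt_one (half_pos hε) (by norm_num : (1 / 2 : ℝ) < 1)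
  have ht : (0 : ℝ) < (1 / 2) ^ j := by positivity
  have hsub : ball ((1 - (1 / 2 : ℝ) ^ j) • x) ((1 / 2) ^ j) ⊆ F := by
    refine (ball_subset_ball' ?_).trans hεF
    have hdist := mem_ball'.1 (mem_ball_one_sub_smul hx1 ht)
    linarith
  refine (hall j).not_gt ?_
  rw [sdiff_eq_empty.2 hsub, measure_empty]
  exact ENNReal.mul_pos (ENNReal.ofReal_pos.2 hμ).ne' (measure_ball_pos _ _ ht).ne'

end GrowingInkSpots

section WeakHarnack

theorem measureReal_le_pow_mul {α : Type*} [MeasurableSpace α] {ν : Measure α} {A : ℕ → Set α}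
    (hA : Antitone A) (hmeas : ∀ k, MeasurableSet (A k)) (hfin : ν (A 0) ≠ ∞) {C : ℝ} (hC : 0 ≤ C)
    (hdecay : ∀ k, ν (A (k + 1)) ≤ ENNReal.ofReal C * ν (A k \ A (k + 1))) (k : ℕ) :
    ν.real (A k) ≤ (C / (1 + C)) ^ k * ν.real (A 0) := by
  have hfin' (k : ℕ) : ν (A k) ≠ ∞ := measure_ne_top_of_subset (hA k.zero_le) hfin
  induction k with
  | zero => simp
  | succ k ih =>
    have hstep : ν.real (A (k + 1)) ≤ C * ν.real (A k \ A (k + 1)) := by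
      rw [← ENNReal.toReal_ofReal hC, Measure.real, Measure.real, ← ENNReal.toReal_mul]
      exact ENNReal.toReal_mono (ENNReal.mul_ne_top ENNReal.ofReal_ne_top
        (measure_ne_top_of_subset sdiff_subset (hfin' k))) (hdecay k)
    rw [measureReal_sdiff (hA k.le_succ) (hmeas _) (hfin' _)] at hstep
    calc ν.real (A (k + 1)) ≤ C / (1 + C) * ν.real (A k) := by
          rw [div_mul_eq_mul_div, le_div_iff₀ (by positivity)]
          linarith
      _ ≤ C / (1 + C) * ((C / (1 + C)) ^ k * ν.real (A 0)) := by gcongr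
      _ = (C / (1 + C)) ^ (k + 1) * ν.real (A 0) := by ring

variable {E : Type*} [NormedAddCommGroup E] [InnerProductSpace ℝ E] [FiniteDimensional ℝ E]
  [MeasurableSpace E] [BorelSpace E] {K : ℝ}

theorem NonnegSupersolution.isOpen_superlevel {v : E → ℝ} (hv : NonnegSupersolution K v (ball 0 4))
    (a : ℝ) : IsOpen {x ∈ ball (0 : E) 1 | a < v x} :=
  (hv.continuousOn.mono (ball_subset_ball (by norm_num))).isOpen_inter_preimage isOpen_ball
    isOpen_Ioi

variable (E)

theorem exists_superlevel_decay (hK : 0 ≤ K) : ∃ M C : ℝ, 1 < M ∧ 0 ≤ C ∧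
    ∀ v : E → ℝ, NonnegSupersolution K v (ball 0 4) → (∃ x₁ ∈ ball (0 : E) 1, v x₁ ≤ 1) →
      ∀ k : ℕ, volume {x ∈ ball (0 : E) 1 | M ^ (k + 1) < v x} ≤ ENNReal.ofReal C *
        volume ({x ∈ ball (0 : E) 1 | M ^ k < v x} \ {x ∈ ball (0 : E) 1 | M ^ (k + 1) < v x}) := by
  obtain ⟨M, μ, hM, hμ, hdoubling⟩ := exists_doubling E hK
  refine ⟨M, 5 ^ finrank ℝ E / μ, hM, by positivity, ?_⟩
  rintro v hv ⟨x₁, hx₁, hvx₁⟩ k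
  let F : Set E := {x ∈ ball (0 : E) 1 | M ^ (k + 1) < v x}
  have hlarge (z : E) (t : ℝ) (ht : 0 < t) (hzt : ball z t ⊆ ball 0 1)
      (hzt' : ball z (t * 4) ⊆ ball 0 4) (y : E) (hy : y ∈ ball z (t * 3)) (hvy : v y ≤ M ^ k) :
      ENNReal.ofReal μ * volume (ball z t) ≤ volume (ball z t \ F) := by
    refine (hdoubling v z t (M ^ k) ht (by positivity) (hv.mono hzt') y hy hvy).trans
      (measure_mono fun x hx => ⟨hx.1, fun hxF => hxF.2.not_ge ?_⟩)
    rw [pow_succ']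
    exact hx.2
  have hF1 : ENNReal.ofReal μ * volume (ball (0 : E) 1) ≤ volume (ball (0 : E) 1 \ F) :=
    hlarge 0 1 one_pos subset_rfl (by rw [one_mul]) x₁ (ball_subset_ball (by norm_num) hx₁)
      (hvx₁.trans (one_le_pow₀ hM.le))
  have hcritical (x : E) (hx : x ∈ F) := exists_critical_ball hμ (hv.isOpen_superlevel _) hx
    (mem_ball_zero_iff.1 hx.1) hF1
  choose! t ht ht1 hsmall hbig using hcritical
  refine volume_le_of_forall_mem_ball hμ (hv.isOpen_superlevel _).measurableSet
    (c := fun x => (1 - 2 * t x) • x) (r := fun x => 2 * t x) ht1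
    (fun x hx => mem_ball_one_sub_smul (mem_ball_zero_iff.1 hx.1) (by linarith [ht x hx]))
    (fun x hx y hy => ⟨?_, ?_⟩) hbig
  · have hx1 := (mem_ball_zero_iff.1 hx.1).le
    simpa using ball_one_sub_smul_subset hx1 (ht1 x hx) le_rfl (by simpa using hy)
  · have hx1 := (mem_ball_zero_iff.1 hx.1).le
    have htx := ht x hx
    have ht1x : t x ≤ 1 := by linarith [ht1 x hx]
    by_contra! hvy
    refine (hlarge _ _ htx (by simpa using ball_one_sub_smul_subset hx1 ht1x le_rfl)
      (ball_one_sub_smul_subset hx1 ht1x (by norm_num)) y ?_ hvy).not_gt (hsmall x hx)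
    refine ball_subset_ball' ?_ hy
    rw [dist_comm, dist_one_sub_smul x (by linarith)]
    nlinarith

theorem exists_volume_superlevel_ball_one_le (hK : 0 ≤ K) {ε : ℝ} (hε : 0 < ε) : ∃ M : ℝ, 0 < M ∧
    ∀ v : E → ℝ, NonnegSupersolution K v (ball 0 4) → (∃ x₁ ∈ ball (0 : E) 1, v x₁ ≤ 1) →
      volume {x ∈ ball (0 : E) 1 | M < v x} ≤ ENNReal.ofReal ε * volume (ball (0 : E) 1) := by
  obtain ⟨M, C, hM, hC, hdecay⟩ := exists_superlevel_decay E hK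
  obtain ⟨k, hk⟩ := exists_pow_lt_of_lt_one hε (by rw [div_lt_one] <;> linarith : C / (1 + C) < 1)
  refine ⟨M ^ k, by positivity, fun v hv hx₁ => ?_⟩
  have hfin {s : Set E} (hs : s ⊆ ball 0 1) : volume s ≠ ∞ :=
    measure_ne_top_of_subset hs measure_ball_lt_top.ne
  have hanti : Antitone fun k => {x ∈ ball (0 : E) 1 | M ^ k < v x} := fun i j hij x hx =>
    ⟨hx.1, (pow_le_pow_right₀ hM.le hij).trans_lt hx.2⟩
  have hreal := measureReal_le_pow_mul hanti (fun k => (hv.isOpen_superlevel _).measurableSet)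
    (hfin (sep_subset _ _)) hC (hdecay v hv hx₁) k
  rw [← ENNReal.toReal_le_toReal (hfin (sep_subset _ _))
    (ENNReal.mul_ne_top ENNReal.ofReal_ne_top (hfin subset_rfl)), ENNReal.toReal_mul,
    ENNReal.toReal_ofReal hε.le]
  refine hreal.trans (mul_le_mul hk.le ?_ (by positivity) hε.le)
  exact measureReal_mono (sep_subset _ _) (hfin subset_rfl)

theorem exists_volume_superlevel_le (hK : 0 ≤ K) {ε : ℝ} (hε : 0 < ε) : ∃ M : ℝ, 0 < M ∧
    ∀ (v : E → ℝ) (z : E) (r a : ℝ), 0 < r → 0 < a → NonnegSupersolution K v (ball z (r * 4)) →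
      ∀ x₀ ∈ ball z r, v x₀ ≤ a →
        volume {x ∈ ball z r | M * a < v x} ≤ ENNReal.ofReal ε * volume (ball z r) := by
  obtain ⟨M, hM, hunit⟩ := exists_volume_superlevel_ball_one_le E hK hε
  refine ⟨M, hM, fun v z r a hr ha hv x₀ hx₀ hvx₀ => ?_⟩
  obtain ⟨y₀, rfl⟩ := exists_eq_add_smul (z := z) (x := x₀) hr
  have := hunit _ (hv.comp_affine hr (inv_pos.2 ha)) ⟨y₀,
    (add_smul_mem_ball_iff (z := z) (s := 1) hr).1 (by rwa [mul_one]),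
    by rwa [inv_mul_le_iff₀ ha, mul_one]⟩
  rw [volume_sep_ball z hr, Measure.addHaar_ball_of_pos _ z hr, mul_left_comm]
  gcongr
  simpa only [lt_inv_mul_iff₀ ha, mul_comm a] using this

end WeakHarnack

section PositiveTrace

variable {E : Type*} [NormedAddCommGroup E] [InnerProductSpace ℝ E]
  {X : E →L[ℝ] E →L[ℝ] ℝ} {m K : ℝ}

/-- For symmetric `X`: the positive eigenvalues of `X` have sum at most `m`. It is encoded through
the diagonals of `X` in all orthonormal bases, which are linear in `X`. -/
def PosTraceLE (X : E →L[ℝ] E →L[ℝ] ℝ) (m : ℝ) : Prop :=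
  ∀ (b : OrthonormalBasis (Fin (finrank ℝ E)) ℝ E) (S : Finset (Fin (finrank ℝ E))),
    ∑ k ∈ S, X (b k) (b k) ≤ m

theorem posTraceLE_of_norm_le {c : ℝ} (hc : ‖X‖ ≤ c) : PosTraceLE X (finrank ℝ E * c) := by
  intro b S
  have hc0 : 0 ≤ c := (norm_nonneg X).trans hc
  calc ∑ k ∈ S, X (b k) (b k) ≤ S.card • c := by
        refine Finset.sum_le_card_nsmul _ _ _ fun k _ => ?_
        have := X.le_opNorm₂ (b k) (b k)
        rw [b.norm_eq_one, mul_one, mul_one] at this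
        exact (le_abs_self _).trans (this.trans hc)
    _ ≤ finrank ℝ E * c := by
        rw [nsmul_eq_mul]
        gcongr
        simpa using S.card_le_univ

theorem apply_self_orthonormalBasis {ι : Type*} [Fintype ι] {v : OrthonormalBasis ι ℝ E}
    {μ : ι → ℝ} (hv : ∀ e, X e e = ∑ i, μ i * ⟪v i, e⟫_ℝ ^ 2) (i : ι) : X (v i) (v i) = μ i := by
  classical
  simp [hv, v.inner_eq_ite]

variable [FiniteDimensional ℝ E]

theorem exists_orthonormalBasis_apply_self_eq (hX : ∀ a b, X a b = X b a) :
    ∃ (v : OrthonormalBasis (Fin (finrank ℝ E)) ℝ E) (μ : Fin (finrank ℝ E) → ℝ),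
      ∀ e, X e e = ∑ i, μ i * ⟪v i, e⟫_ℝ ^ 2 := by
  have hT : (toOperator X : E →ₗ[ℝ] E).IsSymmetric := isSymmetric_toOperator hX
  refine ⟨hT.eigenvectorBasis rfl, hT.eigenvalues rfl, fun e => ?_⟩
  rw [← inner_toOperator, ← (hT.eigenvectorBasis rfl).sum_inner_mul_inner]
  refine Finset.sum_congr rfl fun i _ => ?_
  have heigen : ⟪toOperator X e, hT.eigenvectorBasis rfl i⟫_ℝ =
      hT.eigenvalues rfl i * ⟪hT.eigenvectorBasis rfl i, e⟫_ℝ := by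
    refine (hT e _).trans ?_
    rw [hT.apply_eigenvectorBasis, inner_smul_right, real_inner_comm]
    rfl
  rw [heigen]
  ring

theorem sum_apply_self_eq_sum_apply_self {ι : Type*} [Fintype ι] (X : E →L[ℝ] E →L[ℝ] ℝ)
    (b v : OrthonormalBasis ι ℝ E) : ∑ i, X (b i) (b i) = ∑ i, X (v i) (v i) := by
  simp_rw [← inner_toOperator, real_inner_comm _ (toOperator X _)]
  exact ((toOperator X : E →ₗ[ℝ] E).trace_eq_sum_inner b).symm.trans
    ((toOperator X : E →ₗ[ℝ] E).trace_eq_sum_inner v)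

theorem PosTraceLE.nonneg (h : PosTraceLE X m) : 0 ≤ m := h (stdOrthonormalBasis ℝ E) ∅

theorem PosTraceLE.apply_self_le (h : PosTraceLE X m) (hX : ∀ a b, X a b = X b a) (e : E) :
    X e e ≤ m * ‖e‖ ^ 2 := by
  obtain ⟨v, μ, hv⟩ := exists_orthonormalBasis_apply_self_eq hX
  rw [hv, ← v.sum_sq_inner_right e, Finset.mul_sum]
  gcongr with i
  simpa [apply_self_orthonormalBasis hv] using h v {i}

theorem PosTraceLE.norm_le (h : PosTraceLE X m) (hK : 1 ≤ K) (hX : ∀ a b, X a b = X b a)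
    (hP : IsPucciSub K X) : ‖X‖ ≤ K * m := by
  have hm := h.nonneg
  refine norm_le_of_forall_abs_apply_self_le (by positivity) hX fun e => abs_le.2 ⟨?_, ?_⟩
  · simpa using hP m hm (h.apply_self_le hX) e
  · refine (h.apply_self_le hX e).trans ?_
    gcongr
    exact le_mul_of_one_le_left hm hK

-- If the negative eigenvalues sum to `-q`, ellipticity bounds every positive eigenvalue by `K q`.
theorem PosTraceLE.trace_le (h : PosTraceLE X m) (hK : 0 ≤ K) (hX : ∀ a b, X a b = X b a)
    (hP : IsPucciSub K (-X)) (b : OrthonormalBasis (Fin (finrank ℝ E)) ℝ E) :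
    ∑ k, X (b k) (b k) ≤ (1 - 1 / (finrank ℝ E * K + 1)) * m := by
  obtain ⟨v, μ, hv⟩ := exists_orthonormalBasis_apply_self_eq hX
  have hμ := apply_self_orthonormalBasis hv
  let P : Finset (Fin (finrank ℝ E)) := {i | 0 < μ i}
  have hneg (i) (hi : i ∈ Pᶜ) : 0 ≤ -μ i := by simpa [P] using hi
  let p := ∑ i ∈ P, μ i
  let q := ∑ i ∈ Pᶜ, -μ i
  have hq : 0 ≤ q := Finset.sum_nonneg hneg
  have hpm : p ≤ m := by simpa only [hμ] using h v P
  have hle_q (i) : -μ i ≤ q := by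
    by_cases hi : i ∈ P
    · exact (neg_nonpos.2 (Finset.mem_filter_univ i |>.1 hi).le).trans hq
    · exact Finset.single_le_sum hneg (Finset.mem_compl.2 hi)
  have hle_Kq (i) : μ i ≤ K * q := by
    have hlower := hP q hq (fun e => ?_) (v i)
    · simpa [hμ] using hlower
    · rw [neg_apply, neg_apply, hv, ← v.sum_sq_inner_right e, Finset.mul_sum,
        ← Finset.sum_neg_distrib]
      gcongr with i
      rw [← neg_mul]
      gcongr
      exact hle_q i
  have hpq : p ≤ finrank ℝ E * K * q := calc
    p ≤ P.card • (K * q) := Finset.sum_le_card_nsmul _ _ _ fun i _ => hle_Kq i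
    _ ≤ finrank ℝ E * K * q := by
      rw [nsmul_eq_mul, mul_assoc]
      gcongr
      simpa using P.card_le_univ
  have htrace : ∑ k, X (b k) (b k) = p - q := by
    rw [sum_apply_self_eq_sum_apply_self X b v, ← Finset.sum_add_sum_compl P]
    simp only [hμ, p, q, Finset.sum_neg_distrib, sub_neg_eq_add]
  have hd : 0 < finrank ℝ E * K + 1 := by positivity
  rw [htrace, one_sub_div hd.ne', add_sub_cancel_right, div_mul_eq_mul_div, le_div_iff₀ hd]
  nlinarith [mul_le_mul_of_nonneg_left hpm (by positivity : 0 ≤ finrank ℝ E * K)]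

end PositiveTrace

section SecondDifferences

variable {E : Type*} [NormedAddCommGroup E] [NormedSpace ℝ E] {u : E → ℝ}
  {X : E →L[ℝ] E →L[ℝ] ℝ} {x z : E} {R : ℝ}

/-- The centred second difference quotient of `u` at `x` in the direction `e` with step `h`, an
approximation of `D²u(x)(e, e)`. -/
def secondDiffQuot (u : E → ℝ) (h : ℝ) (e x : E) : ℝ :=
  (u (x + h • e) + u (x - h • e) - 2 * u x) / h ^ 2

theorem abs_secondDiffQuot_sub_le {h ε a : ℝ} (hh : 0 < h) {e : E} {f : E →L[ℝ] ℝ}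
    (hplus : |u (x + h • e) - u x - f (h • e) - h ^ 2 * a / 2| ≤ ε * ‖h • e‖ ^ 2)
    (hminus : |u (x - h • e) - u x + f (h • e) - h ^ 2 * a / 2| ≤ ε * ‖h • e‖ ^ 2) :
    |secondDiffQuot u h e x - a| ≤ 2 * ε * ‖e‖ ^ 2 := by
  have hsplit : secondDiffQuot u h e x - a =
      ((u (x + h • e) - u x - f (h • e) - h ^ 2 * a / 2) +
        (u (x - h • e) - u x + f (h • e) - h ^ 2 * a / 2)) / h ^ 2 := by
    rw [secondDiffQuot]
    field_simp
    ring
  rw [hsplit, abs_div, abs_of_pos (pow_pos hh 2), div_le_iff₀ (pow_pos hh 2)]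
  rw [norm_smul, Real.norm_of_nonneg hh.le, mul_pow] at hplus hminus
  refine (abs_add_le _ _).trans ?_
  linarith

theorem HasD2At.tendsto_secondDiffQuot (hu : HasD2At u X x) (e : E) :
    Tendsto (fun h => secondDiffQuot u h e x) (𝓝[>] 0) (𝓝 (X e e)) := by
  rw [Metric.tendsto_nhds]
  intro ε hε
  obtain ⟨δ, hδ, hδε⟩ : ∃ δ > 0, 2 * δ * ‖e‖ ^ 2 < ε := by
    refine ⟨ε / (2 * (‖e‖ ^ 2 + 1)), by positivity, ?_⟩
    field_simp
    linarith
  obtain ⟨s, hs, htaylor⟩ := hu.exists_abs_taylor_sub_le hδ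
  have hsmall : ∀ᶠ h : ℝ in 𝓝[>] 0, ‖h • e‖ < s := by
    have hlim : Tendsto (fun h : ℝ => ‖h • e‖) (𝓝 0) (𝓝 0) :=
      Continuous.tendsto' (by fun_prop) _ _ (by simp)
    exact nhdsWithin_le_nhds (hlim.eventually_lt_const hs)
  filter_upwards [hsmall, self_mem_nhdsWithin] with h hh hpos
  refine (abs_secondDiffQuot_sub_le hpos (f := fderiv ℝ u x) ?_ ?_).trans_lt hδε
  · simpa [pow_two, mul_assoc] using htaylor (h • e) hh
  · simpa [pow_two, mul_assoc, sub_eq_add_neg] using htaylor (-(h • e)) (by rwa [norm_neg])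

theorem C11On.exists_abs_secondDiffQuot_le (hu : C11On u (ball z R)) :
    ∃ C, 0 ≤ C ∧ ∀ x e : E, ∀ h : ℝ, 0 < h → dist x z + h * ‖e‖ < R →
      |secondDiffQuot u h e x| ≤ C * ‖e‖ ^ 2 := by
  obtain ⟨L, hL⟩ := hu.exists_lipschitzOnWith
  refine ⟨2 * L, by positivity, fun x e h hh hx => ?_⟩
  have hsub : ball x (R - dist x z) ⊆ ball z R := ball_subset_ball' (by linarith)
  have hxR : x ∈ ball z R := by rw [mem_ball]; nlinarith [norm_nonneg e]
  have hnorm : ‖h • e‖ < R - dist x z := by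
    rw [norm_smul, Real.norm_of_nonneg hh.le]
    linarith
  have htaylor {k : E} (hk : ‖k‖ < R - dist x z) := abs_taylor_two_sub_le (B := 0) L.2
    (fun y hy => hu.differentiableAt y (hsub hy))
    (fun y hy => by simpa [dist_eq_norm] using hL.dist_le_mul y (hsub hy) x hxR) hk
  rw [← sub_zero (secondDiffQuot u h e x)]
  refine abs_secondDiffQuot_sub_le hh (f := fderiv ℝ u x) ?_ ?_
  · simpa using htaylor hnorm
  · simpa [sub_eq_add_neg] using htaylor (k := -(h • e)) (by rwa [norm_neg])

end SecondDifferences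

section ConcaveSolutions

variable {E : Type*} [NormedAddCommGroup E] [InnerProductSpace ℝ E] [MeasureSpace E]

/-- `u` solves a concave uniformly elliptic equation on the unit ball, seen only through its
Hessians: `G` is a full-measure set of points of twice differentiability, and every sum of
differences `D²u(p i) - D²u(x)` between points of `G` is of Pucci class. -/
structure ConcaveSolution (K : ℝ) (u : E → ℝ) (G : Set E) : Prop where
  c11On : C11On u (ball 0 1)
  subset_ball : G ⊆ ball 0 1
  ae_mem : ∀ᵐ x, x ∈ ball (0 : E) 1 → x ∈ G
  hasD2At : ∀ x ∈ G, HasD2At u (D2 u x) x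
  isPucciSub_sum : ∀ {ι : Type} (s : Finset ι) (p : ι → E) (x : E), (∀ i ∈ s, p i ∈ G) → x ∈ G →
    IsPucciSub K (∑ i ∈ s, (D2 u (p i) - D2 u x))

variable {K : ℝ} {u : E → ℝ} {G : Set E} {x y : E}

theorem ConcaveSolution.isPucciSub_sub (hu : ConcaveSolution K u G) (hx : x ∈ G) (hy : y ∈ G) :
    IsPucciSub K (D2 u x - D2 u y) := by
  simpa using hu.isPucciSub_sum {()} (fun _ => x) y (fun _ _ => hx) hy

theorem ConcaveSolution.symm_sub (hu : ConcaveSolution K u G) (hx : x ∈ G) (hy : y ∈ G)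
    (a b : E) : (D2 u x - D2 u y) a b = (D2 u x - D2 u y) b a := by
  simp only [sub_apply, (hu.hasD2At x hx).symm a b, (hu.hasD2At y hy).symm a b]

end ConcaveSolutions

section HessianSums

variable {E : Type*} [NormedAddCommGroup E] [InnerProductSpace ℝ E] [FiniteDimensional ℝ E]
  [MeasurableSpace E] [BorelSpace E] {K : ℝ} {u : E → ℝ} {G V : Set E} {y : E} {r : ℝ} {ι : Type}

theorem ConcaveSolution.subsolution_sum_sub (hu : ConcaveSolution K u G) (s : Finset ι) (d : ι → E)
    (hV : V ⊆ ball 0 1) (hVd : ∀ i ∈ s, ∀ x ∈ V, x + d i ∈ ball (0 : E) 1) :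
    Subsolution K (fun x => ∑ i ∈ s, (u (x + d i) - u x)) V where
  c11On := C11On.sum fun i hi => by
    have := hu.c11On.comp_affine (z := d i) (r := 1) (V := V)
      (fun x hx => by simpa [add_comm] using hVd i hi x hx) 1 0
    simpa [add_comm] using this.sub (hu.c11On.mono hV)
  ae_isPucciSub := by
    have hshift : ∀ᵐ x : E, ∀ i ∈ s, x + d i ∈ ball (0 : E) 1 → x + d i ∈ G :=
      s.eventually_all.2 fun i _ =>
        (measurePreserving_add_right volume (d i)).quasiMeasurePreserving.ae hu.ae_mem
    filter_upwards [hu.ae_mem, hshift] with x hx hxd hxV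
    have hxG := hx (hV hxV)
    have hxdG (i) (hi : i ∈ s) : x + d i ∈ G := hxd i hi (hVd i hi x hxV)
    refine ⟨_, HasD2At.sum fun i hi => ?_, hu.isPucciSub_sum s (fun i => x + d i) x hxdG hxG⟩
    have htranslate : HasD2At (fun y => u (y + d i)) (D2 u (x + d i)) x := by
      have := HasD2At.comp_affine (r := 1) (z := d i) (x := x) (u := u) (X := D2 u (x + d i))
        (by simpa [add_comm] using hu.hasD2At _ (hxdG i hi)) 1 0
      simpa [add_comm] using this
    exact htranslate.sub (hu.hasD2At x hxG)

theorem ConcaveSolution.subsolution_sum_secondDiffQuot (hu : ConcaveSolution K u G) (S : Finset ι)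
    {e : ι → E} (he : ∀ k ∈ S, ‖e k‖ ≤ 1) {h : ℝ} (hh : 0 < h) (hr : ‖y‖ + r + h ≤ 1) :
    Subsolution K (fun x => ∑ k ∈ S, secondDiffQuot u h (e k) x) (ball y r) := by
  have hmem (v : E) (hv : ‖v‖ ≤ h) (x : E) (hx : x ∈ ball y r) : x + v ∈ ball (0 : E) 1 := by
    have hxy := norm_le_norm_add_norm_sub' x y
    rw [mem_ball_iff_norm] at hx
    rw [mem_ball_zero_iff]
    linarith [norm_add_le x v]
  have hnorm (k) (hk : k ∈ S) : ‖h • e k‖ ≤ h := by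
    rw [norm_smul, Real.norm_of_nonneg hh.le]
    exact mul_le_of_le_one_right hh.le (he k hk)
  have hdiff := hu.subsolution_sum_sub (S.disjSum S) (V := ball y r)
    (Sum.elim (fun k => h • e k) fun k => -(h • e k))
    (fun x hx => by simpa using hmem 0 (by simpa using hh.le) x hx) fun i hi => by
      rcases i with k | k
      · exact hmem _ (hnorm k (Finset.inl_mem_disjSum.1 hi))
      · exact hmem _ ((norm_neg _).trans_le (hnorm k (Finset.inr_mem_disjSum.1 hi)))
  convert hdiff.mul_add (a := (h ^ 2)⁻¹) (by positivity) 0 using 2 with x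
  simp only [Finset.sum_disjSum, Sum.elim_inl, Sum.elim_inr, ← Finset.sum_add_distrib,
    Finset.mul_sum, add_zero, secondDiffQuot, div_eq_inv_mul, ← sub_eq_add_neg]
  refine Finset.sum_congr rfl fun k _ => ?_
  ring

-- The subsolutions `w j` are sums of second difference quotients, centred at the value at `y`.
theorem ConcaveSolution.exists_seq_subsolution (hu : ConcaveSolution K u G) (hr : ‖y‖ + r < 1)
    (S : Finset ι) {e : ι → E} (he : ∀ k ∈ S, ‖e k‖ ≤ 1) :
    ∃ w : ℕ → E → ℝ, (∀ j, Subsolution K (w j) (ball y r)) ∧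
      (∃ W, ∀ j, ∀ x ∈ ball y r, w j x ≤ W) ∧
      ∀ x ∈ G, Tendsto (fun j => w j x) atTop (𝓝 (∑ k ∈ S, (D2 u x - D2 u y) (e k) (e k))) := by
  obtain ⟨h, -, hh, hlim⟩ := exists_seq_strictAnti_tendsto' (sub_pos.2 hr)
  obtain ⟨C, hC, hbound⟩ := hu.c11On.exists_abs_secondDiffQuot_le
  let c := ∑ k ∈ S, D2 u y (e k) (e k)
  refine ⟨fun j x => ∑ k ∈ S, secondDiffQuot u (h j) (e k) x - c, fun j => ?_,
    ⟨S.card • C - c, fun j x hx => ?_⟩, fun x hx => ?_⟩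
  · have := hu.subsolution_sum_secondDiffQuot S he (hh j).1 (y := y) (r := r)
      (by linarith [(hh j).2])
    simpa [sub_eq_add_neg] using this.mul_add one_pos (-c)
  · refine sub_le_sub_right (Finset.sum_le_card_nsmul _ _ _ fun k hk => ?_) c
    have hxr : dist x 0 + h j * ‖e k‖ < 1 := by
      rw [mem_ball_iff_norm] at hx
      rw [dist_zero_right]
      nlinarith [(hh j).1, (hh j).2, norm_le_norm_add_norm_sub' x y, he k hk]
    calc secondDiffQuot u (h j) (e k) x ≤ C * ‖e k‖ ^ 2 :=
          (le_abs_self _).trans (hbound x (e k) (h j) (hh j).1 hxr)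
      _ ≤ C := mul_le_of_le_one_right hC (pow_le_one₀ (norm_nonneg _) (he k hk))
  · have hlim' : Tendsto h atTop (𝓝[>] 0) :=
      tendsto_nhdsWithin_iff.2 ⟨hlim, .of_forall fun j => (hh j).1⟩
    simp only [sub_apply, Finset.sum_sub_distrib]
    exact (tendsto_finsetSum _ fun k _ =>
      ((hu.hasD2At x hx).tendsto_secondDiffQuot (e k)).comp hlim').sub_const c

end HessianSums

section LimitsOfSubsolutions

theorem eventually_measure_sep_le_abs_sub_lt {α : Type*} [MeasurableSpace α] {ν : Measure α}
    {s : Set α} (hs : MeasurableSet s) (hνs : ν s ≠ ∞) {w : ℕ → α → ℝ} {w₀ : α → ℝ}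
    (hw : ∀ j, AEStronglyMeasurable (w j) (ν.restrict s))
    (hlim : ∀ᵐ x ∂ν, x ∈ s → Tendsto (fun j => w j x) atTop (𝓝 (w₀ x))) {ε : ℝ} (hε : 0 < ε)
    {η : ℝ≥0∞} (hη : 0 < η) : ∀ᶠ j in atTop, ν {x ∈ s | ε ≤ |w j x - w₀ x|} < η := by
  have : IsFiniteMeasure (ν.restrict s) := isFiniteMeasure_restrict.2 hνs
  have hmeasure := tendstoInMeasure_of_tendsto_ae hw ((ae_restrict_iff' hs).2 hlim)
  filter_upwards [(hmeasure (.ofReal ε) (ENNReal.ofReal_pos.2 hε)).eventually_lt_const hη] with j hj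
  rw [Measure.restrict_apply' hs] at hj
  have hsub : {x ∈ s | ε ≤ |w j x - w₀ x|} ⊆
      {x | ENNReal.ofReal ε ≤ edist (w j x) (w₀ x)} ∩ s := fun x hx =>
    ⟨(ENNReal.ofReal_le_ofReal hx.2).trans_eq (by rw [edist_dist, Real.dist_eq]), hx.1⟩
  exact (measure_mono hsub).trans_lt hj

variable {E : Type*} [NormedAddCommGroup E] [InnerProductSpace ℝ E] [FiniteDimensional ℝ E]
  [MeasurableSpace E] [BorelSpace E] {K r m ε : ℝ} {w : ℕ → E → ℝ} {w₀ : E → ℝ} {z : E}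

theorem eventually_volume_sep_le_abs_sub_lt (hw : ∀ j, Subsolution K (w j) (ball z r))
    (hlim : ∀ᵐ x, x ∈ ball z r → Tendsto (fun j => w j x) atTop (𝓝 (w₀ x))) (hε : 0 < ε)
    {η : ℝ≥0∞} (hη : 0 < η) :
    ∀ᶠ j in atTop, volume {x ∈ ball z r | ε ≤ |w j x - w₀ x|} < η :=
  eventually_measure_sep_le_abs_sub_lt measurableSet_ball measure_ball_lt_top.ne
    (fun j => ContinuousOn.aestronglyMeasurable (fun x hx =>
      ((hw j).c11On.differentiableAt x hx).continuousAt.continuousWithinAt) measurableSet_ball)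
    hlim hε hη

theorem eventually_forall_le_of_ae_tendsto (hK : 0 ≤ K) {W : ℝ} (hr : 0 < r) (hε : 0 < ε)
    (hw : ∀ j, Subsolution K (w j) (ball z r)) (hW : ∀ j, ∀ x ∈ ball z r, w j x ≤ W)
    (hlim : ∀ᵐ x, x ∈ ball z r → Tendsto (fun j => w j x) atTop (𝓝 (w₀ x)))
    (hm : ∀ᵐ x, x ∈ ball z r → w₀ x ≤ m) :
    ∀ᶠ j in atTop, ∀ x ∈ ball z (r / 2), w j x ≤ m + ε := by
  obtain ⟨W', hεW', hWW'⟩ : ∃ W', ε ≤ W' ∧ W ≤ m + ε + W' :=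
    ⟨max ε (W - (m + ε)), le_max_left _ _, by linarith [le_max_right ε (W - (m + ε))]⟩
  have hW' : 0 < W' := hε.trans_le hεW'
  let c := ε / 2 / W'
  have hc : 0 < c := by positivity
  have hcW' : c * W' = ε / 2 := div_mul_cancel₀ _ hW'.ne'
  have hc1 : c ≤ 1 := (div_le_one hW').2 (by linarith)
  have hη : 0 <
      ENNReal.ofReal ((c / (8 * (K + 1))) ^ finrank ℝ E) * volume (ball (0 : E) (r / 2)) :=
    ENNReal.mul_pos (ENNReal.ofReal_pos.2 (by positivity)).ne'
      (measure_ball_pos _ _ (half_pos hr)).ne'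
  filter_upwards [eventually_volume_sep_le_abs_sub_lt hw hlim (half_pos hε) hη] with j hj x hx
  by_contra! hlt
  have hsub : ball x (r / 2) ⊆ ball z r := ball_subset_ball' (by
    rw [mem_ball] at hx
    linarith)
  have hshift := ((hw j).mono hsub).mul_add one_pos (-(m + ε))
  have hlarge := hshift.le_volume_ball hK hc hc1 (half_pos hr) hW'
    (fun y hy => by linarith [hW j y (hsub hy)]) (by linarith)
  rw [← Measure.addHaar_ball_center volume x] at hj
  refine (hlarge.trans (measure_mono_ae ?_)).not_gt hj
  filter_upwards [hm] with y hy hyx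
  have hyz := hsub hyx.1
  refine ⟨hyz, le_abs.2 (.inl ?_)⟩
  linarith [hyx.2, hy hyz]

theorem ConcaveSolution.exists_subsolution_near {u : E → ℝ} {G : Set E} {y : E} {ι : Type}
    (hu : ConcaveSolution K u G) (hK : 0 ≤ K) (hr : 0 < r) (hyr : ‖y‖ + r < 1) (S : Finset ι)
    {e : ι → E} (he : ∀ k ∈ S, ‖e k‖ ≤ 1)
    (hm : ∀ x ∈ G, x ∈ ball y r → ∑ k ∈ S, (D2 u x - D2 u y) (e k) (e k) ≤ m)
    {x₁ : E} (hx₁ : x₁ ∈ G) (hε : 0 < ε) {η : ℝ≥0∞} (hη : 0 < η) :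
    ∃ w, Subsolution K w (ball y r) ∧ (∀ x ∈ ball y (r / 2), w x ≤ m + ε) ∧
      ∑ k ∈ S, (D2 u x₁ - D2 u y) (e k) (e k) - ε < w x₁ ∧
      volume {x ∈ ball y r | ε ≤ |w x - ∑ k ∈ S, (D2 u x - D2 u y) (e k) (e k)|} < η := by
  obtain ⟨w, hw, ⟨W, hW⟩, hlim⟩ := hu.exists_seq_subsolution hyr S he
  have hsub : ball y r ⊆ ball 0 1 := ball_subset_ball' (by
    rw [dist_zero_right]
    linarith)
  have hae : ∀ᵐ x, x ∈ ball y r → x ∈ G := hu.ae_mem.mono fun x hx hxy => hx (hsub hxy)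
  have hlim' := hae.mono fun x hx hxy => hlim x (hx hxy)
  have hle := eventually_forall_le_of_ae_tendsto hK hr hε hw hW hlim'
    (hae.mono fun x hx hxy => hm x (hx hxy) hxy)
  have hx₁_gt := (hlim x₁ hx₁).eventually_const_lt (sub_lt_self _ hε)
  obtain ⟨j, hle_j, hx₁_j, hvol_j⟩ := (hle.and (hx₁_gt.and
    (eventually_volume_sep_le_abs_sub_lt hw hlim' hε hη))).exists
  exact ⟨w j, hw j, hle_j, hx₁_j, hvol_j⟩

end LimitsOfSubsolutions

section HessianOscillation

variable {E : Type*} [NormedAddCommGroup E] [InnerProductSpace ℝ E] [FiniteDimensional ℝ E]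
  [MeasurableSpace E] [BorelSpace E] {K : ℝ}

theorem ConcaveSolution.le_volume_sum_D2_sub {u : E → ℝ} {G : Set E} {y : E} {r m c : ℝ} {ι : Type}
    (hu : ConcaveSolution K u G) (hK : 0 ≤ K) (hy : y ∈ G) (hr : 0 < r) (hyr : ‖y‖ + r < 1)
    (hm : 0 < m) (hc : 0 < c) (hc1 : c ≤ 1) (S : Finset ι) {e : ι → E} (he : ∀ k ∈ S, ‖e k‖ ≤ 1)
    (hle : ∀ x ∈ G, x ∈ ball y r → ∑ k ∈ S, (D2 u x - D2 u y) (e k) (e k) ≤ m) :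
    ENNReal.ofReal ((c / 4 / (8 * (K + 1))) ^ finrank ℝ E / 2) * volume (ball y (r / 8)) ≤
      volume {x ∈ ball y (r / 8) | -(c * m) < ∑ k ∈ S, (D2 u x - D2 u y) (e k) (e k)} := by
  set q : E → ℝ := fun x => ∑ k ∈ S, (D2 u x - D2 u y) (e k) (e k)
  set μ := (c / 4 / (8 * (K + 1))) ^ finrank ℝ E
  have hsplit : ENNReal.ofReal μ = ENNReal.ofReal (μ / 2) + ENNReal.ofReal (μ / 2) := by
    rw [← ENNReal.ofReal_add (by positivity) (by positivity), add_halves]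
  have hball : 0 < volume (ball y (r / 8)) := measure_ball_pos _ _ (by positivity)
  have hη : 0 < ENNReal.ofReal (μ / 2) * volume (ball y (r / 8)) :=
    ENNReal.mul_pos (ENNReal.ofReal_pos.2 (by positivity)).ne' hball.ne'
  obtain ⟨w, hw, hw_le, hwy, hvol⟩ := hu.exists_subsolution_near hK hr hyr S he hle hy
    (by positivity : 0 < c * m / 4) hη
  have hwy' : -(c * m / 4) < w y := by simpa using hwy
  have hsub : ball y (r / 8) ⊆ ball y (r / 2) := ball_subset_ball (by linarith)
  have hsub' : ball y (r / 8) ⊆ ball y r := ball_subset_ball (by linarith)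
  have hcm : c * m ≤ m := mul_le_of_le_one_left hm.le hc1
  have hlarge := ((hw.mono hsub').mul_add one_pos (c * m / 4)).le_volume_ball hK
    (by positivity : 0 < c / 4) (by linarith) (by positivity) (by positivity : 0 < 2 * m)
    (fun x hx => by linarith [hw_le x (hsub hx)])
    (by linarith)
  have hcover : {x ∈ ball y (r / 8) | -(c / 4 * (2 * m)) < 1 * w x + c * m / 4} ⊆
      {x ∈ ball y (r / 8) | -(c * m) < q x} ∪ {x ∈ ball y r | c * m / 4 ≤ |w x - q x|} := by
    rintro x ⟨hx, hwx⟩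
    refine or_iff_not_imp_right.2 fun hfar => ⟨hx, ?_⟩
    have hnear := (abs_lt.1 (not_le.1 fun h => hfar ⟨hsub' hx, h⟩)).2
    linarith
  have htotal := (hlarge.trans (measure_mono hcover)).trans
    ((measure_union_le _ _).trans (add_le_add_right hvol.le _))
  change ENNReal.ofReal μ * _ ≤ _ at htotal
  rw [hsplit, add_mul] at htotal
  exact ENNReal.le_of_add_le_add_right
    (ENNReal.mul_ne_top ENNReal.ofReal_ne_top measure_ball_lt_top.ne) htotal

theorem exists_volume_sum_D2_sub_le (E : Type*) [NormedAddCommGroup E] [InnerProductSpace ℝ E]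
    [FiniteDimensional ℝ E] [MeasurableSpace E] [BorelSpace E] (hK : 0 ≤ K) {δ ε : ℝ} (hδ : 0 < δ)
    (hε : 0 < ε) : ∃ θ : ℝ, 0 < θ ∧ θ ≤ 1 / 2 ∧
      ∀ (u : E → ℝ) (G : Set E), ConcaveSolution K u G → ∀ (y : E) (r m : ℝ), 0 < r →
      ‖y‖ + r < 1 → 0 < m → ∀ {ι : Type} (S : Finset ι) (e : ι → E), (∀ k ∈ S, ‖e k‖ ≤ 1) →
      (∀ x ∈ G, x ∈ ball y r → ∑ k ∈ S, (D2 u x - D2 u y) (e k) (e k) ≤ m) →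
      ∀ x₁ ∈ G, x₁ ∈ ball y (r / 8) →
      (1 - θ) * m < ∑ k ∈ S, (D2 u x₁ - D2 u y) (e k) (e k) →
      volume {x ∈ ball y (r / 8) | ∑ k ∈ S, (D2 u x - D2 u y) (e k) (e k) < (1 - δ) * m} ≤
        ENNReal.ofReal ε * volume (ball y (r / 8)) := by
  obtain ⟨M, hM, hdecay⟩ := exists_volume_superlevel_le E hK (half_pos hε)
  have hden : 0 < 3 * M + 1 := by positivity
  refine ⟨min (1 / 2) (δ / (3 * M + 1)), by positivity, min_le_left _ _, ?_⟩
  set θ := min (1 / 2) (δ / (3 * M + 1))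
  have hθδ : θ * (3 * M + 1) ≤ δ := (le_div_iff₀ hden).1 (min_le_right _ _)
  intro u G hu y r m hr hyr hm ι S e he hle x₁ hx₁G hx₁ hgt
  set q : E → ℝ := fun x => ∑ k ∈ S, (D2 u x - D2 u y) (e k) (e k)
  have hball : 0 < volume (ball y (r / 8)) := measure_ball_pos _ _ (by positivity)
  have hη : 0 < ENNReal.ofReal (ε / 2) * volume (ball y (r / 8)) :=
    ENNReal.mul_pos (ENNReal.ofReal_pos.2 (by positivity)).ne' hball.ne'
  obtain ⟨w, hw, hw_le, hwx₁, hvol⟩ := hu.exists_subsolution_near hK hr hyr S he hle hx₁G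
    (by positivity : 0 < θ * m) hη
  have hsub : ball y (r / 8) ⊆ ball y r := ball_subset_ball (by linarith)
  have hradius : r / 8 * 4 = r / 2 := by ring
  have hv : NonnegSupersolution K (fun x => m + θ * m - w x) (ball y (r / 8 * 4)) := by
    refine ⟨fun x hx => sub_nonneg.2 (hw_le x (hradius ▸ hx)), ?_⟩
    simpa [add_comm, sub_eq_add_neg] using
      (hw.mono (ball_subset_ball (by linarith))).mul_add one_pos (-(m + θ * m))
  have hsmall := hdecay _ y (r / 8) (3 * (θ * m)) (by positivity) (by positivity) hv x₁ hx₁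
    (by linarith)
  have hcover : {x ∈ ball y (r / 8) | q x < (1 - δ) * m} ⊆
      {x ∈ ball y (r / 8) | M * (3 * (θ * m)) < m + θ * m - w x} ∪
        {x ∈ ball y r | θ * m ≤ |w x - q x|} := by
    rintro x ⟨hx, hqx⟩
    refine or_iff_not_imp_right.2 fun hfar => ⟨hx, ?_⟩
    have hnear := (abs_lt.1 (not_le.1 fun h => hfar ⟨hsub hx, h⟩)).2
    nlinarith [mul_le_mul_of_nonneg_right hθδ hm.le]
  calc volume {x ∈ ball y (r / 8) | q x < (1 - δ) * m}
      ≤ _ := (measure_mono hcover).trans (measure_union_le _ _)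
    _ ≤ ENNReal.ofReal (ε / 2) * volume (ball y (r / 8)) +
        ENNReal.ofReal (ε / 2) * volume (ball y (r / 8)) := add_le_add hsmall hvol.le
    _ = ENNReal.ofReal ε * volume (ball y (r / 8)) := by
      rw [← add_mul, ← ENNReal.ofReal_add (by positivity) (by positivity), add_halves]

end HessianOscillation

section HessianHolder

theorem exists_le_rpow_of_geometric_decay {q : ℝ} (hq : 1 / 2 ≤ q) (hq1 : q < 1) :
    ∃ α : ℝ, 0 < α ∧ α < 1 ∧ ∀ {a m t : ℝ}, 0 ≤ m → 0 < t → t < 1 →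
      (∀ k : ℕ, t < (1 / 8) ^ k → a ≤ q ^ k * m) → a ≤ 2 * m * t ^ α := by
  have hq0 : 0 < q := by linarith
  have hpow : (1 / 8 : ℝ) ^ Real.logb (1 / 8) q = q :=
    Real.rpow_logb (by norm_num) (by norm_num) hq0
  have hα : 0 < Real.logb (1 / 8) q :=
    Real.logb_pos_of_base_lt_one (by norm_num) (by norm_num) hq0 hq1
  refine ⟨Real.logb (1 / 8) q, hα, ?_, fun {a m t} hm ht ht1 hdecay => ?_⟩
  · rw [Real.logb_lt_iff_lt_rpow_of_base_lt_one (by norm_num) (by norm_num) hq0, Real.rpow_one]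
    linarith
  obtain ⟨k, hk, hk_succ⟩ := Nat.exists_not_and_succ_of_not_zero_of_exists
    (p := fun k => (1 / 8 : ℝ) ^ k ≤ t) (by simpa using ht1)
    ((exists_pow_lt_of_lt_one ht (by norm_num)).imp fun _ => le_of_lt)
  calc a ≤ q ^ k * m := hdecay k (not_le.1 hk)
    _ ≤ 2 * q * (q ^ k * m) := le_mul_of_one_le_left (by positivity) (by linarith)
    _ = 2 * m * ((1 / 8) ^ (k + 1)) ^ Real.logb (1 / 8) q := by
      rw [← Real.rpow_pow_comm (by norm_num), hpow]
      ring
    _ ≤ 2 * m * t ^ Real.logb (1 / 8) q := by gcongr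

-- By ellipticity the trace of `D²u(x) - D²u(y)` stays below `(1 - κ)m`, so its diagonal sums over
-- `S` and `Sᶜ` cannot both be close to their maxima: the former is on most of the ball if it is
-- anywhere, and the latter on a fixed fraction of it.
theorem exists_posTraceLE_step (E : Type*) [NormedAddCommGroup E] [InnerProductSpace ℝ E]
    [FiniteDimensional ℝ E] [MeasurableSpace E] [BorelSpace E] {K : ℝ} (hK : 0 ≤ K) :
    ∃ θ : ℝ, 0 < θ ∧ θ ≤ 1 / 2 ∧ ∀ (u : E → ℝ) (G : Set E), ConcaveSolution K u G →
      ∀ y ∈ G, ∀ r m : ℝ, 0 < r → ‖y‖ + r < 1 → 0 < m →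
      (∀ x ∈ G, x ∈ ball y r → PosTraceLE (D2 u x - D2 u y) m) →
      ∀ x ∈ G, x ∈ ball y (r / 8) → PosTraceLE (D2 u x - D2 u y) ((1 - θ) * m) := by
  obtain ⟨c, hc, hc1, hκ⟩ : ∃ c : ℝ, 0 < c ∧ c ≤ 1 ∧ 1 / (finrank ℝ E * K + 1) = 2 * c := by
    refine ⟨1 / (finrank ℝ E * K + 1) / 2, by positivity, ?_, by ring⟩
    rw [div_div, div_le_one (by positivity)]
    linarith [(by positivity : 0 ≤ finrank ℝ E * K)]
  let μ := (c / 4 / (8 * (K + 1))) ^ finrank ℝ E / 2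
  have hμ : 0 < μ := by positivity
  obtain ⟨θ, hθ, hθ1, hsmall⟩ := exists_volume_sum_D2_sub_le E hK hc (half_pos hμ)
  refine ⟨θ, hθ, hθ1, fun u G hu y hy r m hr hyr hm hle x₁ hx₁G hx₁ b S => ?_⟩
  by_contra! hgt
  have hS := hsmall u G hu y r m hr hyr hm S b (fun k _ => (b.norm_eq_one k).le)
    (fun x hxG hx => hle x hxG hx b S) x₁ hx₁G hx₁ hgt
  have hSc := hu.le_volume_sum_D2_sub hK hy hr hyr hm hc hc1 Sᶜ
    (fun k _ => (b.norm_eq_one k).le) fun x hxG hx => hle x hxG hx b Sᶜ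
  have hsub : ∀ᵐ x, x ∈ {x ∈ ball y (r / 8) | -(c * m) < ∑ k ∈ Sᶜ, (D2 u x - D2 u y) (b k) (b k)} →
      x ∈ {x ∈ ball y (r / 8) | ∑ k ∈ S, (D2 u x - D2 u y) (b k) (b k) < (1 - c) * m} := by
    filter_upwards [hu.ae_mem] with x hx ⟨hxr, hlt⟩
    have hx_ball : x ∈ ball y r := ball_subset_ball (by linarith) hxr
    have hxG := hx (ball_subset_ball' (by rw [dist_zero_right]; linarith) hx_ball)
    have htrace := (hle x hxG hx_ball).trace_le hK (hu.symm_sub hxG hy)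
      ((neg_sub (D2 u x) (D2 u y)).symm ▸ hu.isPucciSub_sub hy hxG) b
    rw [hκ, ← Finset.sum_add_sum_compl S] at htrace
    exact ⟨hxr, by linarith⟩
  have hvol : 0 < volume (ball y (r / 8)) := measure_ball_pos _ _ (by positivity)
  have hcompare := (hSc.trans (measure_mono_ae hsub)).trans hS
  rw [ENNReal.mul_le_mul_iff_left hvol.ne' measure_ball_lt_top.ne,
    ENNReal.ofReal_le_ofReal_iff (by positivity)] at hcompare
  exact (half_lt_self hμ).not_ge hcompare

theorem exists_posTraceLE_pow (E : Type*) [NormedAddCommGroup E] [InnerProductSpace ℝ E]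
    [FiniteDimensional ℝ E] [MeasurableSpace E] [BorelSpace E] {K : ℝ} (hK : 0 ≤ K) :
    ∃ q : ℝ, 1 / 2 ≤ q ∧ q < 1 ∧ ∀ (u : E → ℝ) (G : Set E), ConcaveSolution K u G →
      ∀ y ∈ G, ∀ r m : ℝ, 0 < r → ‖y‖ + r < 1 → 0 < m →
      (∀ x ∈ G, x ∈ ball y r → PosTraceLE (D2 u x - D2 u y) m) →
      ∀ k : ℕ, ∀ x ∈ G, x ∈ ball y (r * (1 / 8) ^ k) →
        PosTraceLE (D2 u x - D2 u y) (q ^ k * m) := by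
  obtain ⟨θ, hθ, hθ1, hstep⟩ := exists_posTraceLE_step E hK
  refine ⟨1 - θ, by linarith, by linarith, fun u G hu y hy r m hr hyr hm hbound k => ?_⟩
  induction k with
  | zero => simpa only [pow_zero, mul_one, one_mul] using hbound
  | succ k ih =>
    intro x hxG hx
    have hrk : r * (1 / 8) ^ k ≤ r :=
      mul_le_of_le_one_right hr.le (pow_le_one₀ (by norm_num) (by norm_num))
    rw [pow_succ', mul_assoc]
    refine hstep u G hu y hy _ _ (by positivity) (by linarith)
      (mul_pos (pow_pos (by linarith) k) hm) ih x hxG ?_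
    rwa [pow_succ, mul_one_div, ← mul_div_assoc] at hx

theorem exists_norm_D2_sub_le (E : Type*) [NormedAddCommGroup E] [InnerProductSpace ℝ E]
    [FiniteDimensional ℝ E] [MeasurableSpace E] [BorelSpace E] {K : ℝ} (hK : 1 ≤ K) :
    ∃ α C : ℝ, 0 < α ∧ α < 1 ∧ 1 ≤ C ∧ ∀ (u : E → ℝ) (G : Set E), ConcaveSolution K u G →
      ∀ y ∈ G, ∀ r M : ℝ, 0 < r → ‖y‖ + r < 1 →
      (∀ x ∈ G, x ∈ ball y r → ‖D2 u x‖ ≤ M) →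
      ∀ x ∈ G, x ∈ ball y r → ‖D2 u x - D2 u y‖ ≤ C * M * (‖x - y‖ / r) ^ α := by
  have hK0 := zero_le_one.trans hK
  obtain ⟨q, hq, hq1, hiter⟩ := exists_posTraceLE_pow E hK0
  obtain ⟨α, hα, hα1, hdecay⟩ := exists_le_rpow_of_geometric_decay hq hq1
  refine ⟨α, 4 * K * (finrank ℝ E + 1), hα, hα1, by nlinarith,
    fun u G hu y hy r M hr hyr hbound x hxG hx => ?_⟩
  have hdiff : ∀ z ∈ G, z ∈ ball y r → ‖D2 u z - D2 u y‖ ≤ 2 * M := fun z hzG hz => by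
    linarith [norm_sub_le (D2 u z) (D2 u y), hbound z hzG hz, hbound y hy (mem_ball_self hr)]
  have hnonneg : 0 ≤ M := (norm_nonneg (D2 u y)).trans (hbound y hy (mem_ball_self hr))
  rcases hnonneg.eq_or_lt with rfl | hM
  · simpa using hdiff x hxG hx
  rcases eq_or_ne x y with rfl | hne
  · rw [sub_self (D2 u x), ContinuousLinearMap.opNorm_zero]
    positivity
  have hm : 0 < (finrank ℝ E + 1) * (2 * M) := by positivity
  have htrace : ∀ z ∈ G, z ∈ ball y r →
      PosTraceLE (D2 u z - D2 u y) ((finrank ℝ E + 1) * (2 * M)) := fun z hzG hz b S =>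
    (posTraceLE_of_norm_le (hdiff z hzG hz) b S).trans
      (mul_le_mul_of_nonneg_right (by simp) (by positivity))
  have ht : 0 < ‖x - y‖ / r := div_pos (norm_sub_pos_iff.2 hne) hr
  rw [mem_ball_iff_norm] at hx
  calc ‖D2 u x - D2 u y‖
      ≤ 2 * (K * ((finrank ℝ E + 1) * (2 * M))) * (‖x - y‖ / r) ^ α :=
        hdecay (by positivity) ht ((div_lt_one hr).2 hx) fun k hk => by
          have hxk : x ∈ ball y (r * (1 / 8) ^ k) := by
            rwa [mem_ball_iff_norm, ← div_lt_iff₀' hr]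
          rw [mul_left_comm]
          exact (hiter u G hu y hy r _ hr hyr hm htrace k x hxG hxk).norm_le hK
            (hu.symm_sub hxG hy) (hu.isPucciSub_sub hxG hy)
    _ = 4 * K * (finrank ℝ E + 1) * M * (‖x - y‖ / r) ^ α := by ring

end HessianHolder

section AEMeanValue

variable {E F : Type*} [NormedAddCommGroup E] [NormedSpace ℝ E] [NormedAddCommGroup F]
  [NormedSpace ℝ F] {L : ℝ≥0} {c : ℝ}

theorem norm_sub_le_of_ae_hasDerivAt_norm_le {γ : ℝ → F} (hγ : LipschitzOnWith L γ (Icc 0 1))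
    (hderiv : ∀ᵐ t, t ∈ Icc 0 1 → ∃ γ', HasDerivAt γ γ' t ∧ ‖γ'‖ ≤ c) : ‖γ 1 - γ 0‖ ≤ c := by
  obtain ⟨φ, hφ, hφγ⟩ := exists_dual_vector'' ℝ (γ 1 - γ 0)
  have hlip : LipschitzOnWith (‖φ‖₊ * L) (φ ∘ γ) (uIcc 0 1) := by
    rw [uIcc_of_le zero_le_one]
    exact φ.lipschitz.comp_lipschitzOnWith hγ
  have hbound : ‖∫ t in (0 : ℝ)..1, deriv (φ ∘ γ) t‖ ≤ c * |1 - 0| := by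
    refine intervalIntegral.norm_integral_le_of_norm_le_const_ae ?_
    filter_upwards [hderiv] with t ht htI
    rw [uIoc_of_le zero_le_one] at htI
    obtain ⟨γ', hγ', hle⟩ := ht (Ioc_subset_Icc_self htI)
    rw [(φ.hasFDerivAt.comp_hasDerivAt t hγ').deriv]
    exact (φ.le_of_opNorm_le_of_le hφ hle).trans_eq (one_mul c)
  rw [hlip.absolutelyContinuousOnInterval.integral_deriv_eq_sub, Function.comp_apply,
    Function.comp_apply, ← map_sub, hφγ] at hbound
  simpa using hbound

variable [MeasurableSpace E] [BorelSpace E] [SecondCountableTopology E] {μ : Measure E} [SFinite μ]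
  [μ.IsAddLeftInvariant]

theorem ae_ae_add_smul {P : E → Prop} (h : ∀ᵐ x ∂μ, P x) (v : E) :
    ∀ᵐ x ∂μ, ∀ᵐ t : ℝ, P (x + t • v) := by
  obtain ⟨N, hN, hN_meas, hN_null⟩ := exists_measurable_superset_of_null (ae_iff.1 h)
  suffices ∀ᵐ x ∂μ, ∀ᵐ t : ℝ, x + t • v ∉ N by
    filter_upwards [this] with x hx
    filter_upwards [hx] with t ht
    exact not_not.1 fun hP => ht (hN hP)
  rw [Measure.ae_ae_comm
    (hN_meas.preimage (by fun_prop : Measurable fun p : E × ℝ => p.1 + p.2 • v)).compl]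
  exact .of_forall fun t => (measurePreserving_add_right μ (t • v)).quasiMeasurePreserving.ae
    (measure_eq_zero_iff_ae_notMem.1 hN_null)

theorem norm_sub_le_of_ae_hasFDerivAt_norm_le [μ.IsOpenPosMeasure] {g : E → F} {U : Set E}
    (hU : IsOpen U) (hconv : Convex ℝ U) (hg : LipschitzOnWith L g U)
    (hderiv : ∀ᵐ z ∂μ, z ∈ U → ∃ g' : E →L[ℝ] F, HasFDerivAt g g' z ∧ ‖g'‖ ≤ c) {x y : E}
    (hx : x ∈ U) (hy : y ∈ U) : ‖g y - g x‖ ≤ c * ‖y - x‖ := by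
  set v := y - x
  have hgood : ∀ᵐ z ∂μ, z ∈ U → z + v ∈ U → ‖g (z + v) - g z‖ ≤ c * ‖v‖ := by
    filter_upwards [ae_ae_add_smul hderiv v] with z hline hz hzv
    have hmem (t : ℝ) (ht : t ∈ Icc (0 : ℝ) 1) : z + t • v ∈ U := hconv.add_smul_mem hz hzv ht
    have hlip : LipschitzOnWith (L * ‖v‖₊) (fun t : ℝ => g (z + t • v)) (Icc 0 1) := by
      refine hg.comp (LipschitzWith.lipschitzOnWith ?_) hmem
      exact .of_dist_le_mul fun s t => by
        rw [dist_add_left, dist_eq_norm, ← sub_smul, norm_smul, mul_comm, dist_eq_norm, coe_nnnorm]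
    have hbound := norm_sub_le_of_ae_hasDerivAt_norm_le (c := c * ‖v‖) hlip <| by
      filter_upwards [hline] with t ht htI
      obtain ⟨g', hg', hle⟩ := ht (hmem t htI)
      have hline' : HasDerivAt (fun t : ℝ => z + t • v) v t := by
        simpa using ((hasDerivAt_id t).smul_const v).const_add z
      exact ⟨g' v, hg'.comp_hasDerivAt t hline', g'.le_of_opNorm_le hle v⟩
    simpa using hbound
  have hxv : x + v = y := add_sub_cancel x y
  have hxvU : x + v ∈ U := hxv.symm ▸ hy
  have hcont : ContinuousAt (fun z => ‖g (z + v) - g z‖) x := by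
    have hgy : ContinuousAt g (x + v) := hg.continuousOn.continuousAt (hU.mem_nhds hxvU)
    exact ((hgy.comp (f := fun z => z + v) (by fun_prop)).sub
      (hg.continuousOn.continuousAt (hU.mem_nhds hx))).norm
  have hnear : ∀ᶠ z in 𝓝 x, z ∈ U ∧ z + v ∈ U :=
    (hU.eventually_mem hx).and ((by fun_prop : Continuous fun z => z + v).continuousAt.eventually
      (hU.mem_nhds hxvU))
  have hfreq := (mem_closure_iff_frequently.1 (Measure.dense_of_ae hgood x)).and_eventually hnear
  simpa only [hxv] using
    le_of_tendsto_of_frequently hcont (hfreq.mono fun z hz => hz.1 hz.2.1 hz.2.2)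

end AEMeanValue

section Interpolation

variable {E : Type*} [NormedAddCommGroup E] [InnerProductSpace ℝ E] [FiniteDimensional ℝ E]
  [MeasurableSpace E] [BorelSpace E] {u : E → ℝ} {U : Set E} {B : E →L[ℝ] E →L[ℝ] ℝ} {x : E}
  {s c M : ℝ}

theorem C11On.ae_hasD2At (hu : C11On u U) (hU : IsOpen U) :
    ∀ᵐ z, z ∈ U → HasD2At u (D2 u z) z := by
  obtain ⟨L, hL⟩ := hu.exists_lipschitzOnWith
  filter_upwards [hL.ae_differentiableWithinAt_of_mem (μ := volume)] with z hz hzU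
  have hzU' := hU.mem_nhds hzU
  exact hu.hasD2At hzU' ((hz hzU).differentiableAt hzU')

theorem C11On.norm_fderiv_sub_sub_le (hu : C11On u U) (hU : IsOpen U) (hconv : Convex ℝ U)
    (hB : ∀ᵐ z, z ∈ U → ‖D2 u z - B‖ ≤ c) {x y : E} (hx : x ∈ U) (hy : y ∈ U) :
    ‖fderiv ℝ u y - fderiv ℝ u x - B (y - x)‖ ≤ c * ‖y - x‖ := by
  obtain ⟨L, hL⟩ := hu.exists_lipschitzOnWith
  have hlip : LipschitzOnWith (L + ‖B‖₊) (fun z => fderiv ℝ u z - B z) U :=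
    hL.sub B.lipschitz.lipschitzOnWith
  have hderiv : ∀ᵐ z, z ∈ U → ∃ g' : E →L[ℝ] E →L[ℝ] ℝ,
      HasFDerivAt (fun z => fderiv ℝ u z - B z) g' z ∧ ‖g'‖ ≤ c := by
    filter_upwards [hu.ae_hasD2At hU, hB] with z hz hzB hzU
    exact ⟨_, (hz hzU).hasFDerivAt.sub B.hasFDerivAt, hzB hzU⟩
  have hrearrange : fderiv ℝ u y - fderiv ℝ u x - B (y - x) =
      fderiv ℝ u y - B y - (fderiv ℝ u x - B x) := by
    rw [map_sub]
    abel
  rw [hrearrange]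
  exact norm_sub_le_of_ae_hasFDerivAt_norm_le hU hconv hlip hderiv hx hy

theorem C11On.abs_taylor_two_sub_le (hu : C11On u (ball x s)) (hc : 0 ≤ c)
    (hB : ∀ᵐ z, z ∈ ball x s → ‖D2 u z - B‖ ≤ c) {h : E} (hh : ‖h‖ < s) :
    |u (x + h) - u x - fderiv ℝ u x h - B h h / 2| ≤ c * ‖h‖ ^ 2 :=
  EvansKrylov.abs_taylor_two_sub_le hc hu.differentiableAt
    (fun _ hy => hu.norm_fderiv_sub_sub_le isOpen_ball (convex_ball x s) hB
      (mem_ball_self ((norm_nonneg h).trans_lt hh)) hy) hh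

theorem C11On.norm_le_of_ae_norm_D2_sub_le (hu : C11On u (ball x s)) (hs : 0 < s) (hc : 0 ≤ c)
    (hsymm : ∀ a b, B a b = B b a) (hB : ∀ᵐ z, z ∈ ball x s → ‖D2 u z - B‖ ≤ c)
    (hM : ∀ z ∈ ball x s, |u z| ≤ M) : ‖B‖ ≤ 16 * M / s ^ 2 + 2 * c := by
  have hMx := hM x (mem_ball_self hs)
  have hM0 : 0 ≤ M := (abs_nonneg _).trans hMx
  refine norm_le_of_forall_abs_apply_self_le (by positivity) hsymm fun e => ?_
  rcases eq_or_ne e 0 with rfl | he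
  · simp
  have he' : 0 < ‖e‖ := norm_pos_iff.2 he
  obtain ⟨h, hh, hhe⟩ : ∃ h : ℝ, 0 < h ∧ h * ‖e‖ = s / 2 :=
    ⟨s / 2 / ‖e‖, by positivity, div_mul_cancel₀ _ he'.ne'⟩
  have hnorm : ‖h • e‖ < s := by
    rw [norm_smul, Real.norm_of_nonneg hh.le, hhe]
    exact half_lt_self hs
  have hclose : |secondDiffQuot u h e x - B e e| ≤ 2 * c * ‖e‖ ^ 2 := by
    have hplus := hu.abs_taylor_two_sub_le hc hB hnorm
    have hminus := hu.abs_taylor_two_sub_le hc hB (h := -(h • e)) (by rwa [norm_neg])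
    refine abs_secondDiffQuot_sub_le (f := fderiv ℝ u x) hh ?_ ?_
    · simpa [sq, mul_assoc] using hplus
    · simpa [sq, mul_assoc, sub_eq_add_neg] using hminus
  have hquot : |secondDiffQuot u h e x| ≤ 16 * M / s ^ 2 * ‖e‖ ^ 2 := by
    have hplus := abs_le.1 (hM (x + h • e) (by simpa using hnorm))
    have hminus := abs_le.1 (hM (x - h • e) (by simpa [dist_eq_norm] using hnorm))
    have hcoef : 16 * M / s ^ 2 * ‖e‖ ^ 2 = 4 * M / h ^ 2 := by
      rw [show s = 2 * (h * ‖e‖) by linarith]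
      field_simp
      ring
    rw [secondDiffQuot, abs_div, abs_of_pos (pow_pos hh 2), hcoef]
    gcongr
    rw [abs_le] at hMx ⊢
    constructor <;> linarith
  linarith [abs_sub_abs_le_abs_sub (B e e) (secondDiffQuot u h e x),
    abs_sub_comm (B e e) (secondDiffQuot u h e x)]

theorem C11On.norm_fderiv_le (hu : C11On u (ball x s)) (hs : 0 < s) (hc : 0 ≤ c)
    (hD2 : ∀ᵐ z, z ∈ ball x s → ‖D2 u z‖ ≤ c) (hM : ∀ z ∈ ball x s, |u z| ≤ M) :
    ‖fderiv ℝ u x‖ ≤ 4 * M / s + c * s / 2 := by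
  have hMx := hM x (mem_ball_self hs)
  have hM0 : 0 ≤ M := (abs_nonneg _).trans hMx
  refine ContinuousLinearMap.opNorm_le_of_unit_norm (by positivity) fun e he => ?_
  have hnorm : ‖(s / 2) • e‖ = s / 2 := by
    rw [norm_smul, he, mul_one, Real.norm_of_nonneg (half_pos hs).le]
  have htaylor : |u (x + (s / 2) • e) - u x - s / 2 * fderiv ℝ u x e| ≤ c * (s / 2) ^ 2 := by
    have hD2' : ∀ᵐ z, z ∈ ball x s → ‖D2 u z - 0‖ ≤ c := hD2.mono fun z hz hzs => by
      rw [sub_zero (D2 u z)]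
      exact hz hzs
    simpa [hnorm] using hu.abs_taylor_two_sub_le hc hD2' (hnorm.trans_lt (half_lt_self hs))
  have hMe := hM (x + (s / 2) • e) (by
    simpa only [mem_ball_iff_norm, add_sub_cancel_left, hnorm] using half_lt_self hs)
  have hscaled : s / 2 * |fderiv ℝ u x e| ≤ s / 2 * (4 * M / s + c * s / 2) := by
    have hrhs : s / 2 * (4 * M / s + c * s / 2) = 2 * M + c * (s / 2) ^ 2 := by
      field_simp
      ring
    rw [← abs_of_pos (half_pos hs), ← abs_mul, abs_of_pos (half_pos hs), hrhs]
    rw [abs_le] at htaylor hMe hMx ⊢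
    constructor <;> linarith
  exact le_of_mul_le_mul_left hscaled (half_pos hs)

end Interpolation

section HessianBound

theorem le_two_mul_of_self_improving {ι : Type*} {f : ι → ℝ} {A : ℝ} (hf : BddAbove (range f))
    (himprove : ∀ Q, (∀ i, f i ≤ Q) → ∀ i, f i ≤ A + Q / 2) (i : ι) : f i ≤ 2 * A := by
  have : Nonempty ι := ⟨i⟩
  have hsup : ⨆ j, f j ≤ A + (⨆ j, f j) / 2 := ciSup_le (himprove _ (le_ciSup hf))
  linarith [le_ciSup hf i]

theorem le_div_sq_of_sq_mul_le {a s t Q : ℝ} (ht : 0 < t) (hts : t ≤ s) (ha : 0 ≤ a)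
    (h : s ^ 2 * a ≤ Q) : a ≤ Q / t ^ 2 := by
  rw [le_div_iff₀' (pow_pos ht 2)]
  refine le_trans ?_ h
  gcongr

theorem exists_rpow_eq {α t : ℝ} (hα : 0 < α) (ht : 0 < t) (ht1 : t ≤ 1) :
    ∃ σ : ℝ, 0 < σ ∧ σ ≤ 1 ∧ σ ^ α = t :=
  ⟨t ^ α⁻¹, by positivity, Real.rpow_le_one ht.le ht1 (by positivity),
    Real.rpow_inv_rpow ht.le hα.ne'⟩

variable (E : Type*) [NormedAddCommGroup E] [InnerProductSpace ℝ E] [FiniteDimensional ℝ E]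
  [MeasurableSpace E] [BorelSpace E] {K : ℝ}

-- On the ball of radius `σ(1 - ‖x‖)/2` the Hölder estimate makes `D²u` oscillate by so little that
-- interpolation recovers `‖D²u(x)‖` from `sup |u|` up to half of the bound assumed on `D²u`.
theorem exists_sq_mul_norm_D2_le_add_half (hK : 1 ≤ K) :
    ∃ A : ℝ, 0 < A ∧ ∀ (u : E → ℝ) (G : Set E), ConcaveSolution K u G →
      ∀ M : ℝ, (∀ z ∈ ball (0 : E) 1, |u z| ≤ M) →
      ∀ Q : ℝ, (∀ x ∈ G, (1 - ‖x‖) ^ 2 * ‖D2 u x‖ ≤ Q) →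
      ∀ x ∈ G, (1 - ‖x‖) ^ 2 * ‖D2 u x‖ ≤ A * M + Q / 2 := by
  obtain ⟨α, C, hα, -, hC, hholder⟩ := exists_norm_D2_sub_le E hK
  obtain ⟨σ, hσ, hσ1, hσα⟩ := exists_rpow_eq hα (t := 1 / (16 * C)) (by positivity)
    ((div_le_one (by positivity)).2 (by linarith))
  refine ⟨64 / σ ^ 2, by positivity, fun u G hu M hM Q hQ x hx => ?_⟩
  have hQ0 : 0 ≤ Q := le_trans (by positivity) (hQ x hx)
  obtain ⟨d, hd⟩ : ∃ d, d = 1 - ‖x‖ := ⟨_, rfl⟩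
  have hd0 : 0 < d := by
    have := mem_ball_zero_iff.1 (hu.subset_ball hx)
    linarith
  have hlarge : ∀ z ∈ G, z ∈ ball x (d / 2) → ‖D2 u z‖ ≤ Q / (d / 2) ^ 2 := fun z hzG hz =>
    le_div_sq_of_sq_mul_le (half_pos hd0) (by linarith [norm_lt_of_mem_ball hz])
      (norm_nonneg (D2 u z)) (hQ z hzG)
  have hosc := hholder u G hu x hx (d / 2) _ (half_pos hd0) (by linarith) hlarge
  have hsmall : σ * (d / 2) ≤ d / 2 := mul_le_of_le_one_left (half_pos hd0).le hσ1
  have hsub : ball x (σ * (d / 2)) ⊆ ball 0 1 :=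
    ball_subset_ball' (by rw [dist_zero_right]; linarith)
  have hclose : ∀ᵐ z, z ∈ ball x (σ * (d / 2)) →
      ‖D2 u z - D2 u x‖ ≤ C * (Q / (d / 2) ^ 2) * σ ^ α := by
    filter_upwards [hu.ae_mem] with z hzG hz
    refine (hosc z (hzG (hsub hz)) (ball_subset_ball hsmall hz)).trans ?_
    have hratio : ‖z - x‖ / (d / 2) ≤ σ :=
      (div_le_iff₀ (half_pos hd0)).2 (mem_ball_iff_norm.1 hz).le
    gcongr
  have hinterp := (hu.c11On.mono hsub).norm_le_of_ae_norm_D2_sub_le (by positivity)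
    (by positivity) (hu.hasD2At x hx).symm hclose fun z hz => hM z (hsub hz)
  rw [← hd]
  calc d ^ 2 * ‖D2 u x‖
      ≤ d ^ 2 * (16 * M / (σ * (d / 2)) ^ 2 + 2 * (C * (Q / (d / 2) ^ 2) * σ ^ α)) := by gcongr
    _ = 64 / σ ^ 2 * M + Q / 2 := by
      rw [hσα]
      field_simp
      ring

theorem exists_sq_mul_norm_D2_le (hK : 1 ≤ K) :
    ∃ C : ℝ, 0 < C ∧ ∀ (u : E → ℝ) (G : Set E), ConcaveSolution K u G →
      ∀ M : ℝ, (∀ z ∈ ball (0 : E) 1, |u z| ≤ M) →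
      ∀ x ∈ G, (1 - ‖x‖) ^ 2 * ‖D2 u x‖ ≤ C * M := by
  obtain ⟨A, hA, himprove⟩ := exists_sq_mul_norm_D2_le_add_half E hK
  refine ⟨2 * A, by positivity, fun u G hu M hM x hx => ?_⟩
  obtain ⟨L, hL⟩ := hu.c11On.exists_lipschitzOnWith
  have hbdd : BddAbove (range fun z : G => (1 - ‖(z : E)‖) ^ 2 * ‖D2 u z‖) := by
    refine ⟨1 * L, ?_⟩
    rintro _ ⟨⟨z, hz⟩, rfl⟩
    have hz1 := mem_ball_zero_iff.1 (hu.subset_ball hz)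
    exact mul_le_mul (pow_le_one₀ (by linarith) (by linarith [norm_nonneg z]))
      (norm_fderiv_le_of_lipschitzOn ℝ (isOpen_ball.mem_nhds (hu.subset_ball hz)) hL)
      (norm_nonneg (D2 u z)) zero_le_one
  rw [mul_assoc]
  exact le_two_mul_of_self_improving hbdd
    (fun Q hQ z => himprove u G hu M hM Q (fun w hw => hQ ⟨w, hw⟩) z z.2) ⟨x, hx⟩

end HessianBound

section InteriorEstimate

theorem norm_lt_of_mem_ball_half {E : Type*} [SeminormedAddCommGroup E] {x z : E}
    (hx : x ∈ ball (0 : E) (1 / 2)) (hz : z ∈ ball x (1 / 4)) : ‖z‖ < 3 / 4 := by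
  linarith [norm_lt_of_mem_ball hz, mem_ball_zero_iff.1 hx]

theorem div_quarter_rpow_le {α t : ℝ} (hα : α ≤ 1) (ht : 0 ≤ t) :
    (t / (1 / 4)) ^ α ≤ 4 * t ^ α := by
  rw [Real.div_rpow ht (by norm_num), div_eq_inv_mul, ← Real.inv_rpow (by norm_num)]
  gcongr
  simpa using Real.rpow_le_rpow_of_exponent_le (x := 4) (by norm_num) hα

variable (E : Type*) [NormedAddCommGroup E] [InnerProductSpace ℝ E] [FiniteDimensional ℝ E]
  [MeasurableSpace E] [BorelSpace E] {K : ℝ}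

theorem exists_norm_D2_sub_le_mul_rpow (hK : 1 ≤ K) :
    ∃ α C : ℝ, 0 < α ∧ α < 1 ∧ 1 ≤ C ∧ ∀ (u : E → ℝ) (G : Set E), ConcaveSolution K u G →
      ∀ M : ℝ, (∀ x ∈ G, ‖x‖ < 3 / 4 → ‖D2 u x‖ ≤ M) →
      ∀ x ∈ G, x ∈ ball 0 (1 / 2) → ∀ y ∈ G, y ∈ ball 0 (1 / 2) →
        ‖D2 u x - D2 u y‖ ≤ C * M * ‖x - y‖ ^ α := by
  obtain ⟨α, C, hα, hα1, hC, hholder⟩ := exists_norm_D2_sub_le E hK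
  refine ⟨α, 8 * C, hα, hα1, by linarith, fun u G hu M hM x hxG hx y hyG hy => ?_⟩
  have hMx := hM x hxG (by linarith [mem_ball_zero_iff.1 hx])
  have hMy := hM y hyG (by linarith [mem_ball_zero_iff.1 hy])
  have hM0 : 0 ≤ M := (norm_nonneg (D2 u x)).trans hMx
  suffices ‖D2 u x - D2 u y‖ ≤ 2 * C * M * (‖x - y‖ / (1 / 4)) ^ α by
    grw [this, div_quarter_rpow_le hα1.le (norm_nonneg _)]
    linarith
  rcases lt_or_ge ‖x - y‖ (1 / 4) with hnear | hfar
  · refine (hholder u G hu y hyG (1 / 4) M (by norm_num) (by linarith [mem_ball_zero_iff.1 hy])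
      (fun z hzG hz => hM z hzG (norm_lt_of_mem_ball_half hy hz)) x hxG
      (mem_ball_iff_norm.2 hnear)).trans ?_
    gcongr
    linarith
  · calc ‖D2 u x - D2 u y‖ ≤ 2 * M := by linarith [norm_sub_le (D2 u x) (D2 u y)]
      _ = 2 * 1 * M * 1 := by ring
      _ ≤ 2 * C * M * (‖x - y‖ / (1 / 4)) ^ α := by
        gcongr
        exact Real.one_le_rpow ((one_le_div (by norm_num)).2 hfar) hα.le

theorem exists_interior_estimate (hK : 1 ≤ K) :
    ∃ α C : ℝ, 0 < α ∧ α < 1 ∧ 1 ≤ C ∧ ∀ (u : E → ℝ) (G : Set E), ConcaveSolution K u G →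
      ∀ M : ℝ, (∀ z ∈ ball (0 : E) 1, |u z| ≤ M) →
      (∀ x ∈ ball (0 : E) (1 / 2), ‖fderiv ℝ u x‖ ≤ C * M) ∧
      (∀ x ∈ G, x ∈ ball 0 (1 / 2) → ‖D2 u x‖ ≤ C * M) ∧
      ∀ x ∈ G, x ∈ ball 0 (1 / 2) → ∀ y ∈ G, y ∈ ball 0 (1 / 2) →
        ‖D2 u x - D2 u y‖ ≤ C * M * ‖x - y‖ ^ α := by
  obtain ⟨α, C₁, hα, hα1, hC₁, hholder⟩ := exists_norm_D2_sub_le_mul_rpow E hK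
  obtain ⟨C₂, hC₂, hbound⟩ := exists_sq_mul_norm_D2_le E hK
  have hC₁C₂ : 16 * C₂ ≤ C₁ * (16 * C₂) := le_mul_of_one_le_left (by positivity) hC₁
  refine ⟨α, 16 + C₁ * (16 * C₂), hα, hα1,
    le_add_of_le_of_nonneg (by norm_num) (by positivity), fun u G hu M hM => ?_⟩
  have hM0 : 0 ≤ M := (abs_nonneg _).trans (hM 0 (by simp))
  have hD2 : ∀ x ∈ G, ‖x‖ < 3 / 4 → ‖D2 u x‖ ≤ 16 * C₂ * M := fun x hxG hx =>
    (le_div_sq_of_sq_mul_le (t := 1 / 4) (by norm_num) (by linarith) (norm_nonneg (D2 u x))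
      (hbound u G hu M hM x hxG)).trans_eq (by ring)
  have hconst : 16 * C₂ * M ≤ (16 + C₁ * (16 * C₂)) * M := by gcongr; linarith
  refine ⟨fun x hx => ?_, fun x hxG hx => ?_, fun x hxG hx y hyG hy => ?_⟩
  · have hsub : ball x (1 / 4) ⊆ ball 0 1 := fun z hz =>
      mem_ball_zero_iff.2 ((norm_lt_of_mem_ball_half hx hz).trans (by norm_num))
    refine ((hu.c11On.mono hsub).norm_fderiv_le (c := 16 * C₂ * M) (by norm_num) (by positivity)
      ?_ fun z hz => hM z (hsub hz)).trans ?_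
    · filter_upwards [hu.ae_mem] with z hzG hz
      exact hD2 z (hzG (hsub hz)) (norm_lt_of_mem_ball_half hx hz)
    · have : 0 ≤ C₂ * M := by positivity
      linarith [mul_le_mul_of_nonneg_right hC₁C₂ hM0]
  · exact (hD2 x hxG (by linarith [mem_ball_zero_iff.1 hx])).trans hconst
  · refine (hholder u G hu _ hD2 x hxG hx y hyG hy).trans ?_
    rw [← mul_assoc]
    gcongr
    linarith

end InteriorEstimate

section Extension

variable {X Y : Type*}

theorem exists_continuousOn_closure_extension [UniformSpace X] [UniformSpace Y]
    [CompleteSpace Y] [T2Space Y] {f : X → Y} {S : Set X} (hf : UniformContinuousOn f S) :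
    ∃ g, EqOn g f S ∧ ContinuousOn g (closure S) := by
  refine ⟨extendFrom S f, extendFrom_extends hf.continuousOn,
    continuousOn_extendFrom subset_rfl fun x hx => ?_⟩
  have hne : (𝓝[S] x).NeBot := mem_closure_iff_nhdsWithin_neBot.1 hx
  have hcauchy : Cauchy (𝓝[S] x) := cauchy_nhds.mono nhdsWithin_le_nhds
  exact cauchy_map_iff_exists_tendsto.1 (hcauchy.map_of_le hf inf_le_right)

theorem exists_holder_extension [NormedAddCommGroup X] [NormedAddCommGroup Y] [CompleteSpace Y]
    {f : X → Y} {S : Set X} {A B α : ℝ} (hA : 0 ≤ A) (hα : 0 < α) (hbound : ∀ x ∈ S, ‖f x‖ ≤ B)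
    (hholder : ∀ x ∈ S, ∀ y ∈ S, ‖f x - f y‖ ≤ A * ‖x - y‖ ^ α) :
    ∃ g, EqOn g f S ∧ (∀ x ∈ closure S, ‖g x‖ ≤ B) ∧
      ∀ x ∈ closure S, ∀ y ∈ closure S, ‖g x - g y‖ ≤ A * ‖x - y‖ ^ α := by
  have huc : UniformContinuousOn f S := by
    lift A to ℝ≥0 using hA
    lift α to ℝ≥0 using hα.le
    refine HolderOnWith.uniformContinuousOn (C := A) (fun x hx y hy => ?_) (NNReal.coe_pos.1 hα)
    rw [edist_dist, edist_dist, ENNReal.ofReal_rpow_of_nonneg dist_nonneg hα.le,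
      ← ENNReal.ofReal_coe_nnreal, ← ENNReal.ofReal_mul A.coe_nonneg, dist_eq_norm, dist_eq_norm]
    exact ENNReal.ofReal_le_ofReal (hholder x hx y hy)
  obtain ⟨g, hgf, hg⟩ := exists_continuousOn_closure_extension huc
  refine ⟨g, hgf, fun x hx => ?_, fun x hx y hy => ?_⟩
  · exact le_on_closure (fun z hz => (congrArg norm (hgf hz)).trans_le (hbound z hz)) hg.norm
      continuousOn_const hx
  · have hpair : (x, y) ∈ closure (S ×ˢ S) := by
      rw [closure_prod_eq]
      exact ⟨hx, hy⟩
    have hcont : ContinuousOn (fun p : X × X => ‖g p.1 - g p.2‖) (closure (S ×ˢ S)) := by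
      rw [closure_prod_eq]
      exact ((hg.comp continuousOn_fst fun p hp => hp.1).sub
        (hg.comp continuousOn_snd fun p hp => hp.2)).norm
    have hmod : Continuous fun p : X × X => A * ‖p.1 - p.2‖ ^ α :=
      ((continuous_fst.sub continuous_snd).norm.rpow_const fun _ => .inr hα.le).const_mul A
    refine le_on_closure (fun p hp => ?_) hcont hmod.continuousOn hpair
    rw [hgf hp.1, hgf hp.2]
    exact hholder _ hp.1 _ hp.2

end Extension

section Matrices

variable {n : ℕ}

/-- The matrix `(X (eⱼ, eᵢ))ᵢⱼ` of a bilinear form on `ℝⁿ`, built from the operator representing the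
form so that the form and its matrix have the same norm. -/
def formMatrix : (En n →L[ℝ] En n →L[ℝ] ℝ) →ₗ[ℝ] Mat n where
  toFun X := (Matrix.toEuclideanCLM (𝕜 := ℝ)).symm (toOperator X)
  map_add' X Y := by
    rw [← map_add, toOperator, ContinuousLinearMap.comp_add]
    rfl
  map_smul' c X := by
    rw [RingHom.id_apply, ← map_smul, toOperator, ContinuousLinearMap.comp_smul]
    rfl

theorem toEuclideanCLM_formMatrix (X : En n →L[ℝ] En n →L[ℝ] ℝ) :
    Matrix.toEuclideanCLM (𝕜 := ℝ) (formMatrix X) = toOperator X :=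
  (Matrix.toEuclideanCLM (𝕜 := ℝ)).apply_symm_apply _

@[simp]
theorem opNorm_formMatrix (X : En n →L[ℝ] En n →L[ℝ] ℝ) : opNorm (formMatrix X) = ‖X‖ := by
  rw [opNorm, toEuclideanCLM_formMatrix, norm_toOperator]

theorem dotProduct_formMatrix_mulVec (X : En n →L[ℝ] En n →L[ℝ] ℝ) (a b : En n) :
    a.ofLp ⬝ᵥ (formMatrix X).mulVec b.ofLp = X b a := by
  rw [← Matrix.inner_toEuclideanCLM, toEuclideanCLM_formMatrix, real_inner_comm, inner_toOperator]

theorem formMatrix_apply (X : En n →L[ℝ] En n →L[ℝ] ℝ) (i j : Fin n) :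
    formMatrix X i j = X (EuclideanSpace.single j 1) (EuclideanSpace.single i 1) := by
  rw [← dotProduct_formMatrix_mulVec]
  simp

theorem isSymm_formMatrix {X : En n →L[ℝ] En n →L[ℝ] ℝ} (hX : ∀ a b, X a b = X b a) :
    (formMatrix X).IsSymm :=
  Matrix.IsSymm.ext fun i j => by rw [formMatrix_apply, formMatrix_apply, hX]

theorem posSemidef_formMatrix {X : En n →L[ℝ] En n →L[ℝ] ℝ} (hX : ∀ a b, X a b = X b a)
    (hpos : ∀ e, 0 ≤ X e e) : (formMatrix X).PosSemidef :=
  .of_dotProduct_mulVec_nonneg (Matrix.isHermitian_iff_isSymm.2 (isSymm_formMatrix hX)) fun v => by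
    simpa only [← dotProduct_formMatrix_mulVec, star_trivial] using hpos (WithLp.toLp 2 v)

theorem hessian_eq_formMatrix {u : En n → ℝ} {x : En n}
    (hu : DifferentiableAt ℝ (fderiv ℝ u) x) : hessian u x = formMatrix (D2 u x) := by
  ext i j
  rw [formMatrix_apply, hessian, Matrix.of_apply, pd2,
    fderiv_clm_apply hu (differentiableAt_const _)]
  simp

end Matrices

section UniformEllipticity

variable {n : ℕ} {lam Lam : ℝ} {F : Mat n → ℝ} {A X : En n →L[ℝ] En n →L[ℝ] ℝ}

theorem concaveOn_of_concaveOnSym (hF : ConcaveOnSym F) :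
    ConcaveOn ℝ {M : Mat n | M.IsSymm} F := by
  refine ⟨fun M hM N hN a b _ _ _ => (hM.smul a).add (hN.smul b),
    fun M hM N hN a b ha hb hab => ?_⟩
  obtain rfl : b = 1 - a := by linarith
  exact hF M N hM hN a ⟨ha, by linarith⟩

theorem isPucciSub_sub (hF : UnifEllipticOperator lam Lam F) (hlam : 0 < lam) (hLam : 0 ≤ Lam)
    (hA : ∀ a b, A a b = A b a) (hX : ∀ a b, X a b = X b a)
    (hle : F (formMatrix X) ≤ F (formMatrix A)) : IsPucciSub (Lam / lam) (A - X) := by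
  intro c hc hupper e
  let J : En n →L[ℝ] En n →L[ℝ] ℝ := c • innerSL ℝ
  let Z : En n →L[ℝ] En n →L[ℝ] ℝ := J - (A - X)
  have hJ (a b : En n) : J a b = c * ⟪a, b⟫_ℝ := rfl
  have hJ_symm (a b : En n) : J a b = J b a := by rw [hJ, hJ, real_inner_comm]
  have hJ_self (e : En n) : J e e = c * ‖e‖ ^ 2 := by rw [hJ, real_inner_self_eq_norm_sq]
  have hJ_norm : ‖J‖ ≤ c :=
    norm_le_of_forall_abs_apply_self_le hc hJ_symm fun e => by
      rw [hJ_self, abs_of_nonneg (by positivity)]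
  have hZ_self (e : En n) : Z e e = c * ‖e‖ ^ 2 - (A - X) e e := by rw [← hJ_self]; rfl
  have hZ_symm (a b : En n) : Z a b = Z b a := by simp [Z, hJ_symm a b, hA a b, hX a b]
  have hZ_pos (e : En n) : 0 ≤ Z e e := by rw [hZ_self]; linarith [hupper e]
  have hlower := (hF _ _ (isSymm_formMatrix hA) (isSymm_formMatrix hZ_symm)
    (posSemidef_formMatrix hZ_symm hZ_pos)).1
  have hJ_pos (e : En n) : 0 ≤ J e e := by rw [hJ_self]; positivity
  have hraise := (hF _ _ (isSymm_formMatrix hX) (isSymm_formMatrix hJ_symm)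
    (posSemidef_formMatrix hJ_symm hJ_pos)).2
  rw [← map_add, opNorm_formMatrix] at hlower hraise
  rw [show A + Z = X + J by simp only [Z]; abel] at hlower
  have hZ_norm : ‖Z‖ ≤ Lam / lam * c := by
    rw [div_mul_eq_mul_div, le_div_iff₀' hlam]
    linarith [mul_le_mul_of_nonneg_left hJ_norm hLam]
  have hZ_le : Z e e ≤ Lam / lam * c * ‖e‖ ^ 2 :=
    calc Z e e ≤ ‖Z‖ * ‖e‖ * ‖e‖ := (le_abs_self _).trans (Z.le_opNorm₂ e e)
      _ ≤ Lam / lam * c * ‖e‖ ^ 2 := by rw [mul_assoc, ← sq]; gcongr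
  rw [hZ_self] at hZ_le
  have : 0 ≤ c * ‖e‖ ^ 2 := by positivity
  linarith

theorem sum_sub_eq_card_smul {ι V : Type*} [AddCommGroup V] [Module ℝ V] {s : Finset ι}
    (hs : s.Nonempty) (P : ι → V) (X : V) :
    ∑ i ∈ s, (P i - X) = (s.card : ℝ) • (∑ i ∈ s, (s.card : ℝ)⁻¹ • P i - X) := by
  rw [Finset.sum_sub_distrib P fun _ => X, Finset.sum_const, smul_sub, ← Finset.smul_sum,
    smul_inv_smul₀ (by exact_mod_cast hs.card_ne_zero), Nat.cast_smul_eq_nsmul]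

theorem isPucciSub_sum_sub (hF_conc : ConcaveOnSym F) (hF : UnifEllipticOperator lam Lam F)
    (hlam : 0 < lam) (hLam : 0 ≤ Lam) {ι : Type*} (s : Finset ι)
    {P : ι → En n →L[ℝ] En n →L[ℝ] ℝ} (hP : ∀ i ∈ s, ∀ a b, P i a b = P i b a)
    (hX : ∀ a b, X a b = X b a) (hle : ∀ i ∈ s, F (formMatrix X) ≤ F (formMatrix (P i))) :
    IsPucciSub (Lam / lam) (∑ i ∈ s, (P i - X)) := by
  rcases s.eq_empty_or_nonempty with rfl | hs
  · intro c hc _ e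
    have : 0 ≤ Lam / lam * c * ‖e‖ ^ 2 := by positivity
    simpa using this
  · have hcard : (0 : ℝ) < s.card := by exact_mod_cast hs.card_pos
    let avg : En n →L[ℝ] En n →L[ℝ] ℝ := ∑ i ∈ s, (s.card : ℝ)⁻¹ • P i
    have havg_symm (a b : En n) : avg a b = avg b a := by
      simp only [avg, sum_apply, smul_apply]
      exact Finset.sum_congr rfl fun i hi => by rw [hP i hi]
    have hweights : ∑ _i ∈ s, (s.card : ℝ)⁻¹ = 1 := by
      rw [Finset.sum_const, nsmul_eq_mul, mul_inv_cancel₀ hcard.ne']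
    have havg := ((concaveOn_of_concaveOnSym hF_conc).convex_ge (F (formMatrix X))).sum_mem
      (fun _ _ => inv_nonneg.2 hcard.le) hweights
      fun i hi => ⟨isSymm_formMatrix (hP i hi), hle i hi⟩
    rw [sum_sub_eq_card_smul hs P X]
    refine (isPucciSub_sub hF hlam hLam havg_symm hX ?_).smul hcard
    simpa only [avg, map_sum, map_smul] using havg.2

theorem concaveSolution_of_ae_eq_zero (hF_conc : ConcaveOnSym F)
    (hF : UnifEllipticOperator lam Lam F) (hlam : 0 < lam) (hLam : 0 ≤ Lam) {u : En n → ℝ}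
    (hu : C11On u (ball 0 1))
    (hsol : ∀ᵐ x, x ∈ ball (0 : En n) 1 →
      DifferentiableAt ℝ (fderiv ℝ u) x ∧ F (hessian u x) = 0) :
    ConcaveSolution (Lam / lam) u
      {x ∈ ball 0 1 | DifferentiableAt ℝ (fderiv ℝ u) x ∧ F (hessian u x) = 0} where
  c11On := hu
  subset_ball := sep_subset _ _
  ae_mem := hsol.mono fun x hx hx1 => ⟨hx1, hx hx1⟩
  hasD2At x hx := hu.hasD2At (isOpen_ball.mem_nhds hx.1) hx.2.1
  isPucciSub_sum s p x hp hx := by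
    have hsymm (z : En n) (hz : z ∈ {x ∈ ball 0 1 | DifferentiableAt ℝ (fderiv ℝ u) x ∧
        F (hessian u x) = 0}) := (hu.hasD2At (isOpen_ball.mem_nhds hz.1) hz.2.1).symm
    refine isPucciSub_sum_sub hF_conc hF hlam hLam s (fun i hi => hsymm _ (hp i hi))
      (hsymm x hx) fun i hi => ?_
    rw [← hessian_eq_formMatrix hx.2.1, ← hessian_eq_formMatrix (hp i hi).2.1, hx.2.2,
      (hp i hi).2.2]

end UniformEllipticity

section HessianRepresentative

variable {E : Type*} [NormedAddCommGroup E] [InnerProductSpace ℝ E] [FiniteDimensional ℝ E]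
  [MeasurableSpace E] [BorelSpace E]

theorem ConcaveSolution.ball_half_subset_closure {K : ℝ} {u : E → ℝ} {G : Set E}
    (hu : ConcaveSolution K u G) : ball 0 (1 / 2) ⊆ closure (G ∩ ball 0 (1 / 2)) := by
  have hsub : ball (0 : E) (1 / 2) ⊆ ball 0 1 := ball_subset_ball (by norm_num)
  refine ((Measure.dense_of_ae hu.ae_mem).open_subset_closure_inter isOpen_ball).trans <|
    closure_mono fun z hz => ⟨hz.2 (hsub hz.1), hz.1⟩

variable (E) in
theorem exists_holder_hessian_estimate {K : ℝ} (hK : 1 ≤ K) :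
    ∃ α C : ℝ, 0 < α ∧ α < 1 ∧ 1 ≤ C ∧ ∀ (u : E → ℝ) (G : Set E), ConcaveSolution K u G →
      ∀ M : ℝ, (∀ z ∈ ball (0 : E) 1, |u z| ≤ M) →
      ∃ T : E → E →L[ℝ] E →L[ℝ] ℝ, (∀ x ∈ G, x ∈ ball 0 (1 / 2) → T x = D2 u x) ∧
        (∀ x ∈ ball (0 : E) (1 / 2), |u x| ≤ C * M ∧ ‖fderiv ℝ u x‖ ≤ C * M ∧ ‖T x‖ ≤ C * M) ∧
        ∀ x ∈ ball (0 : E) (1 / 2), ∀ y ∈ ball (0 : E) (1 / 2),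
          ‖T x - T y‖ ≤ C * M * ‖x - y‖ ^ α := by
  obtain ⟨α, C, hα, hα1, hC, hest⟩ := exists_interior_estimate E hK
  refine ⟨α, C, hα, hα1, hC, fun u G hu M hM => ?_⟩
  have hM0 : 0 ≤ M := (abs_nonneg _).trans (hM 0 (by simp))
  obtain ⟨hfderiv, hD2, hholder⟩ := hest u G hu M hM
  obtain ⟨T, hTeq, hTbound, hTholder⟩ := exists_holder_extension (f := D2 u)
    (S := G ∩ ball 0 (1 / 2)) (by positivity) hα (fun x hx => hD2 x hx.1 hx.2)
    fun x hx y hy => hholder x hx.1 hx.2 y hy.1 hy.2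
  have hcl := hu.ball_half_subset_closure
  refine ⟨T, fun x hxG hx => hTeq ⟨hxG, hx⟩, fun x hx => ⟨?_, hfderiv x hx, hTbound x (hcl hx)⟩,
    fun x hx y hy => hTholder x (hcl hx) y (hcl hy)⟩
  exact (hM x (ball_subset_ball (by norm_num) hx)).trans (le_mul_of_one_le_left hM0 hC)

end HessianRepresentative

end EvansKrylov

theorem evans_krylov_general
    (n : ℕ) (lam Lam : ℝ) (hlam : 0 < lam) (hLam : lam ≤ Lam) :
    ∃ α C : ℝ, α ∈ Set.Ioo (0 : ℝ) 1 ∧ 0 < C ∧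
      ∀ (F : Mat n → ℝ), ConcaveOnSym F → UnifEllipticOperator lam Lam F →
      ∀ (u : En n → ℝ) (L : ℝ≥0),
        ContDiffOn ℝ 1 u (ball (0 : En n) 1) →
        LipschitzOnWith L (fun x => fderiv ℝ u x) (ball (0 : En n) 1) →
        (∀ᵐ x ∂(volume.restrict (ball (0 : En n) 1)),
          DifferentiableAt ℝ (fun y => fderiv ℝ u y) x ∧ F (hessian u x) = 0) →
        ∀ K : ℝ, (∀ x ∈ ball (0 : En n) 1, |u x| ≤ K) →
        ∃ H : En n → Mat n,
          (∀ᵐ x ∂(volume.restrict (ball (0 : En n) (1 / 2))), H x = hessian u x) ∧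
          (∀ x ∈ ball (0 : En n) (1 / 2),
            |u x| ≤ C * K ∧ ‖fderiv ℝ u x‖ ≤ C * K ∧ opNorm (H x) ≤ C * K) ∧
          (∀ x ∈ ball (0 : En n) (1 / 2), ∀ y ∈ ball (0 : En n) (1 / 2), x ≠ y →
            opNorm (H x - H y) ≤ C * K * ‖x - y‖ ^ α) := by
  obtain ⟨α, C, hα, hα1, hC, hest⟩ :=
    EvansKrylov.exists_holder_hessian_estimate (En n) ((one_le_div hlam).2 hLam)
  refine ⟨α, C, ⟨hα, hα1⟩, one_pos.trans_le hC, fun F hF_conc hF u L hu hL hsol K hK => ?_⟩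
  have hu11 : EvansKrylov.C11On u (ball 0 1) :=
    ⟨fun x hx => (hu.contDiffAt (isOpen_ball.mem_nhds hx)).differentiableAt one_ne_zero, L, hL⟩
  have hsolution := EvansKrylov.concaveSolution_of_ae_eq_zero hF_conc hF hlam
    (hlam.le.trans hLam) hu11 ((ae_restrict_iff' measurableSet_ball).1 hsol)
  obtain ⟨T, hTeq, hbound, hholder⟩ := hest u _ hsolution K hK
  refine ⟨fun x => EvansKrylov.formMatrix (T x), ?_, fun x hx => ?_, fun x hx y hy _ => ?_⟩
  · rw [ae_restrict_iff' measurableSet_ball]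
    filter_upwards [hsolution.ae_mem] with x hxG hx
    have hxG := hxG (ball_subset_ball (by norm_num) hx)
    rw [hTeq x hxG hx, EvansKrylov.hessian_eq_formMatrix hxG.2.1]
  · rw [EvansKrylov.opNorm_formMatrix]
    exact hbound x hx
  · rw [← map_sub, EvansKrylov.opNorm_formMatrix]
    exact hholder x hx y hy

/-- **Evans–Krylov theorem (1982).** Let `F` be concave and uniformly elliptic with `F(0)=0`.
There are `α ∈ (0,1)` and `C > 0` depending only on `n, λ, Λ` such that any `C^{1,1}(B₁)`
solution of `F(D²u) = 0` a.e. in `B₁` has an `α`-Hölder continuous Hessian representative on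
`B_{1/2}`, with all the interior norms controlled by `C ‖u‖_{L^∞(B₁)}`. -/
theorem evans_krylov
    (n : ℕ) (hn : 2 ≤ n) (lam Lam : ℝ) (hlam : 0 < lam) (hLam : lam ≤ Lam) :
    ∃ α C : ℝ, α ∈ Set.Ioo (0 : ℝ) 1 ∧ 0 < C ∧
      ∀ (F : Mat n → ℝ), ConcaveOnSym F → F 0 = 0 → UnifEllipticOperator lam Lam F →
      ∀ (u : En n → ℝ) (L : ℝ≥0),
        ContDiffOn ℝ 1 u (ball (0 : En n) 1) →
        LipschitzOnWith L (fun x => fderiv ℝ u x) (ball (0 : En n) 1) →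
        (∀ᵐ x ∂(volume.restrict (ball (0 : En n) 1)),
          DifferentiableAt ℝ (fun y => fderiv ℝ u y) x ∧ F (hessian u x) = 0) →
        ∀ K : ℝ, (∀ x ∈ ball (0 : En n) 1, |u x| ≤ K) →
        ∃ H : En n → Mat n,
          (∀ᵐ x ∂(volume.restrict (ball (0 : En n) (1 / 2))), H x = hessian u x) ∧
          (∀ x ∈ ball (0 : En n) (1 / 2),
            |u x| ≤ C * K ∧ ‖fderiv ℝ u x‖ ≤ C * K ∧ opNorm (H x) ≤ C * K) ∧
          (∀ x ∈ ball (0 : En n) (1 / 2), ∀ y ∈ ball (0 : En n) (1 / 2), x ≠ y →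
            opNorm (H x - H y) ≤ C * K * ‖x - y‖ ^ α) := by
  obtain ⟨α, C, hα, hC, hest⟩ := evans_krylov_general n lam Lam hlam hLam
  exact ⟨α, C, hα, hC, fun F hF_conc _ hF => hest F hF_conc hF⟩
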